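/- arXiv:1502.05454 — 2 statements merged into one kernel-verified Lean document; each statement's English description precedes it below -/
import Mathlib

section
/- Let T > 0, let λ ∈ ℂ with λ ≠ (2πn/T)² for every integer n ≥ 0, and let f ∈ L²([0,T]; ℂ). Define y(x) = ∫₀ᵀ G(λ; x, t) f(t) dt for x ∈ [0,T]. Then y is continuously differentiable on [0,T], y′(x) = y′(0) + ∫₀ˣ ( −λ y(t) − f(t) ) dt for all x ∈ [0,T] (i.e. y solves −y″ − λ y = f), and y satisfies the periodic boundary conditions y(0) = y(T) and y′(0) = y′(T). -/
open MeasureTheory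

/-- The Green's function of `-d²/dx²` with periodic boundary conditions on `[0,T]`:
`G(λ; x, t) = -(1/(2√λ)) cos(√λ (T/2 - |x - t|)) / sin(√λ T/2)`. -/
noncomputable def periodicGreen (T : ℝ) (lam : ℂ) (x t : ℝ) : ℂ :=
  -(1 / (2 * lam ^ ((1:ℂ)/2))) *
    Complex.cos (lam ^ ((1:ℂ)/2) * ((T / 2 - |x - t| : ℝ) : ℂ)) /
    Complex.sin (lam ^ ((1:ℂ)/2) * ((T : ℂ) / 2))

/-! Write `λ = s²`. By the addition theorem, `G(λ; x, t)` is the smooth kernel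
`-cos(s (T/2 + x - t)) / (2 s sin(s T/2))`, minus `sin(s (x - t)) / s` when `t ≤ x`. Expanding the
cosine in `x`, this exhibits `y` as the variation-of-constants solution
`cos(s x) y₀ + s⁻¹ sin(s x) y₁ - s⁻¹ ∫₀ˣ sin(s (x - t)) f(t) dt` of `-u'' - s² u = f`, with `y₀`
and `y₁` chosen to make it periodic. Since `f` is merely integrable, Volterra convolutions
`k ∗ f (x) = ∫₀ˣ k(x - t) f(t) dt` are not differentiated pointwise: Fubini on the triangle
`t ≤ z ≤ x` gives `k ∗ f = k(0) ∫₀ˣ f + ∫₀ˣ k' ∗ f`. For `k = sin(s ·)`, vanishing at `0`, this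
makes the convolution continuously differentiable; for `k = cos(s ·)` it is the integrated
equation. -/

open Set

section Interval

variable {E : Type*} [NormedAddCommGroup E] {a b x : ℝ}

lemma intervalIntegrable_of_mem_Icc {f : ℝ → E} (hf : IntervalIntegrable f volume a b)
    (hx : x ∈ Icc a b) : IntervalIntegrable f volume a x :=
  hf.mono_set (uIcc_subset_uIcc_left (Icc_subset_uIcc hx))

variable [NormedSpace ℝ E]

lemma integral_add_of_mem_Icc {f : ℝ → E} (hf : IntervalIntegrable f volume a b)
    (hx : x ∈ Icc a b) : (∫ t in a..x, f t) + ∫ t in x..b, f t = ∫ t in a..b, f t :=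
  intervalIntegral.integral_add_adjacent_intervals (intervalIntegrable_of_mem_Icc hf hx)
    (hf.mono_set (uIcc_subset_uIcc_right (Icc_subset_uIcc hx)))

lemma integral_integral_swap_triangle {F : ℝ → ℝ → E} (hab : a ≤ b)
    (hF : IntegrableOn (Function.uncurry F) (Ioc a b ×ˢ Ioc a b)) :
    ∫ z in a..b, ∫ t in a..z, F z t = ∫ t in a..b, ∫ z in t..b, F z t := by
  set L : Set (ℝ × ℝ) := {p | p.2 ≤ p.1}
  have hL : MeasurableSet L := measurableSet_le measurable_snd measurable_fst
  have inner_left : ∀ z ∈ Ioc a b,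
      ∫ t in a..z, F z t = ∫ t in Ioc a b, L.indicator (Function.uncurry F) (z, t) := by
    intro z hz
    rw [← intervalIntegral.integral_indicator (Ioc_subset_Icc_self hz),
      intervalIntegral.integral_of_le hab]
    rfl
  have inner_right : ∀ t ∈ Ioc a b,
      ∫ z in t..b, F z t = ∫ z in Ioc a b, L.indicator (Function.uncurry F) (z, t) := by
    intro t ht
    have hIcc : Icc t b = Ioc a b ∩ Ici t := by grind
    rw [intervalIntegral.integral_of_le ht.2, ← integral_Icc_eq_integral_Ioc, hIcc,
      ← setIntegral_indicator measurableSet_Ici]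
    rfl
  rw [intervalIntegral.integral_of_le hab, intervalIntegral.integral_of_le hab,
    setIntegral_congr_fun measurableSet_Ioc inner_left,
    setIntegral_congr_fun measurableSet_Ioc inner_right]
  rw [IntegrableOn, Measure.volume_eq_prod, ← Measure.prod_restrict] at hF
  exact integral_integral_swap (f := fun z t ↦ L.indicator (Function.uncurry F) (z, t))
    (hF.indicator hL)

end Interval

section Volterra

variable {E : Type*} [NormedAddCommGroup E] [NormedSpace ℂ E] {a b x : ℝ}
  {k k' : ℝ → ℂ} {f : ℝ → E}

/-- The Volterra convolution `∫ₐˣ k(x - t) f(t) dt` of a scalar kernel `k` with a vector-valued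
function `f`; it carries the causal part of the Green's function. -/
noncomputable def volterraConv (a : ℝ) (k : ℝ → ℂ) (f : ℝ → E) (x : ℝ) : E :=
  ∫ t in a..x, k (x - t) • f t

lemma volterraConv_self (a : ℝ) (k : ℝ → ℂ) (f : ℝ → E) : volterraConv a k f a = 0 :=
  intervalIntegral.integral_same

lemma volterraConv_const_mul (c : ℂ) (a : ℝ) (k : ℝ → ℂ) (f : ℝ → E) (x : ℝ) :
    volterraConv a (fun u ↦ c * k u) f x = c • volterraConv a k f x := by
  simp only [volterraConv, mul_smul, intervalIntegral.integral_smul]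

lemma exists_norm_comp_sub_le (hk : Continuous k) (a b : ℝ) :
    ∃ C, ∀ x ∈ Icc a b, ∀ t ∈ Icc a b, ‖k (x - t)‖ ≤ C := by
  obtain ⟨C, hC⟩ := (isCompact_Icc.prod isCompact_Icc).exists_bound_of_continuousOn
    (f := fun p : ℝ × ℝ ↦ k (p.1 - p.2)) (s := Icc a b ×ˢ Icc a b) (by fun_prop)
  exact ⟨C, fun x hx t ht ↦ hC (x, t) ⟨hx, ht⟩⟩

lemma integrableOn_comp_sub_smul (hk : Continuous k) (hf : IntegrableOn f (Ioc a b)) :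
    IntegrableOn (fun p : ℝ × ℝ ↦ k (p.1 - p.2) • f p.2) (Ioc a b ×ˢ Ioc a b) := by
  obtain ⟨C, hC⟩ := exists_norm_comp_sub_le hk a b
  have hf₂ : IntegrableOn (fun p : ℝ × ℝ ↦ f p.2) (Ioc a b ×ˢ Ioc a b) := by
    rw [IntegrableOn, Measure.volume_eq_prod, ← Measure.prod_restrict]
    exact Integrable.comp_snd hf _
  refine hf₂.bdd_smul C (Continuous.aestronglyMeasurable (by fun_prop)) ?_
  filter_upwards [ae_restrict_mem (measurableSet_Ioc.prod measurableSet_Ioc)] with p hp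
  exact hC _ (Ioc_subset_Icc_self hp.1) _ (Ioc_subset_Icc_self hp.2)

lemma continuousOn_volterraConv (hk : Continuous k) (hf : IntervalIntegrable f volume a b) :
    ContinuousOn (volterraConv a k f) (Icc a b) := by
  intro x₀ hx₀
  have hab : a ≤ b := hx₀.1.trans hx₀.2
  obtain ⟨C, hC⟩ := exists_norm_comp_sub_le hk a b
  suffices ContinuousWithinAt
      (fun x ↦ ∫ t in a..b, indicator {t | t ≤ x} (fun t ↦ k (x - t) • f t) t) (Icc a b) x₀ from
    this.congr (fun _ hx ↦ (intervalIntegral.integral_indicator hx).symm)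
      (intervalIntegral.integral_indicator hx₀).symm
  refine intervalIntegral.continuousWithinAt_of_dominated_interval (bound := fun t ↦ C * ‖f t‖)
    (.of_forall fun x ↦ ?_) ?_ (hf.norm.const_mul C) ?_
  · exact ((Continuous.aestronglyMeasurable (by fun_prop)).smul
      hf.def'.aestronglyMeasurable).indicator measurableSet_Iic
  · filter_upwards [self_mem_nhdsWithin] with x hx
    refine .of_forall fun t ht ↦ ?_
    rw [uIoc_of_le hab] at ht
    calc ‖indicator {t | t ≤ x} (fun t ↦ k (x - t) • f t) t‖
        ≤ ‖k (x - t) • f t‖ := norm_indicator_le_norm_self _ _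
      _ = ‖k (x - t)‖ * ‖f t‖ := norm_smul _ _
      _ ≤ C * ‖f t‖ := by gcongr; exact hC x hx t (Ioc_subset_Icc_self ht)
  · -- For fixed `t` the integrand jumps only at `x = t`, so for a.e. `t` it is continuous at `x₀`.
    filter_upwards [Measure.ae_ne volume x₀] with t ht _
    refine ContinuousAt.continuousWithinAt ?_
    rcases ht.lt_or_gt with h | h
    · refine ContinuousAt.congr (f := fun x ↦ k (x - t) • f t) (by fun_prop) ?_
      filter_upwards [Ioi_mem_nhds h] with x (hx : t < x)
      exact Eq.symm (indicator_of_mem (s := {t | t ≤ x}) hx.le _)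
    · refine (continuousAt_const (y := (0 : E))).congr ?_
      filter_upwards [Iio_mem_nhds h] with x (hx : x < t)
      exact Eq.symm (indicator_of_notMem (s := {t | t ≤ x}) hx.not_ge _)

variable [CompleteSpace E]

lemma volterraConv_eq_add_integral (hk : ∀ u, HasDerivAt k (k' u) u) (hk' : Continuous k')
    (hax : a ≤ x) (hf : IntervalIntegrable f volume a x) :
    volterraConv a k f x =
      k 0 • (∫ t in a..x, f t) + ∫ z in a..x, volterraConv a k' f z := by
  have kernel_ftc : ∀ t, ∫ z in t..x, k' (z - t) = k (x - t) - k 0 := by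
    intro t
    rw [intervalIntegral.integral_comp_sub_right k' t, sub_self]
    exact intervalIntegral.integral_eq_sub_of_hasDerivAt (fun u _ ↦ hk u)
      (hk'.intervalIntegrable _ _)
  have hkc : Continuous k := continuous_iff_continuousAt.2 fun u ↦ (hk u).continuousAt
  have hf' := (intervalIntegrable_iff_integrableOn_Ioc_of_le hax).1 hf
  have hkf : IntervalIntegrable (fun t ↦ k (x - t) • f t) volume a x :=
    hf.continuousOn_smul (by fun_prop)
  have swap : ∫ z in a..x, volterraConv a k' f z = volterraConv a k f x - k 0 • ∫ t in a..x, f t :=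
    calc ∫ z in a..x, volterraConv a k' f z
        = ∫ t in a..x, ∫ z in t..x, k' (z - t) • f t :=
          integral_integral_swap_triangle hax (integrableOn_comp_sub_smul hk' hf')
      _ = ∫ t in a..x, (k (x - t) • f t - k 0 • f t) := by
          simp only [intervalIntegral.integral_smul_const, kernel_ftc, sub_smul]
      _ = volterraConv a k f x - k 0 • ∫ t in a..x, f t := by
          rw [intervalIntegral.integral_sub hkf (hf.continuousOn_smul continuousOn_const),
            intervalIntegral.integral_smul, volterraConv]
  rw [swap, add_sub_cancel]

lemma hasDerivWithinAt_volterraConv (hk : ∀ u, HasDerivAt k (k' u) u) (hk' : Continuous k')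
    (hk₀ : k 0 = 0) (hf : IntervalIntegrable f volume a b) (hx : x ∈ Icc a b) :
    HasDerivWithinAt (volterraConv a k f) (volterraConv a k' f x) (Icc a b) x := by
  have hcont : ContinuousOn (volterraConv a k' f) (Icc a b) := continuousOn_volterraConv hk' hf
  have eq_primitive : ∀ z ∈ Icc a b,
      volterraConv a k f z = ∫ w in a..z, volterraConv a k' f w := fun z hz ↦ by
    rw [volterraConv_eq_add_integral hk hk' hz.1 (intervalIntegrable_of_mem_Icc hf hz), hk₀,
      zero_smul, zero_add]
  have : Fact (x ∈ Icc a b) := ⟨hx⟩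
  refine HasDerivWithinAt.congr (intervalIntegral.integral_hasDerivWithinAt_right ?_ ?_
    (hcont x hx)) eq_primitive (eq_primitive x hx)
  · exact (hcont.mono (Icc_subset_Icc_right hx.2)).intervalIntegrable_of_Icc hx.1
  · exact hcont.stronglyMeasurableAtFilter_nhdsWithin measurableSet_Icc x

end Volterra

section ForcedOscillator

variable {E : Type*} [NormedAddCommGroup E] [NormedSpace ℂ E]

/-- The variation-of-constants formula for the solution of `-u'' - s² u = f` with `u(0) = u₀` and
`u'(0) = u₁`; it requires `s ≠ 0`. -/
noncomputable def forcedOscillation (s : ℂ) (f : ℝ → E) (u₀ u₁ : E) (x : ℝ) : E :=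
  Complex.cos (s * x) • u₀ + (Complex.sin (s * x) / s) • u₁ -
    s⁻¹ • volterraConv 0 (fun u ↦ Complex.sin (s * u)) f x

/-- The derivative of `forcedOscillation s f u₀ u₁`, as given by variation of constants. -/
noncomputable def forcedOscillationDeriv (s : ℂ) (f : ℝ → E) (u₀ u₁ : E) (x : ℝ) : E :=
  Complex.cos (s * x) • u₁ - (s * Complex.sin (s * x)) • u₀ -
    volterraConv 0 (fun u ↦ Complex.cos (s * u)) f x

variable {s : ℂ} {f : ℝ → E} {u₀ u₁ : E} {x T : ℝ}

lemma forcedOscillationDeriv_zero : forcedOscillationDeriv s f u₀ u₁ 0 = u₁ := by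
  simp [forcedOscillationDeriv, volterraConv_self]

lemma hasDerivAt_cos_mul_ofReal (s : ℂ) (x : ℝ) :
    HasDerivAt (fun u : ℝ ↦ Complex.cos (s * u)) (-s * Complex.sin (s * x)) x := by
  have h := ((Complex.hasDerivAt_cos _).comp _ ((hasDerivAt_id (x : ℂ)).const_mul s)).comp_ofReal
  exact h.congr_deriv (by simp only [id_eq, mul_one]; ring)

lemma hasDerivAt_sin_mul_ofReal (s : ℂ) (x : ℝ) :
    HasDerivAt (fun u : ℝ ↦ Complex.sin (s * u)) (s * Complex.cos (s * x)) x := by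
  have h := ((Complex.hasDerivAt_sin _).comp _ ((hasDerivAt_id (x : ℂ)).const_mul s)).comp_ofReal
  exact h.congr_deriv (by simp only [id_eq, mul_one]; ring)

lemma continuousOn_forcedOscillation (hf : IntervalIntegrable f volume 0 T) :
    ContinuousOn (forcedOscillation s f u₀ u₁) (Icc 0 T) := by
  have := continuousOn_volterraConv (k := fun u ↦ Complex.sin (s * u)) (by fun_prop) hf
  unfold forcedOscillation
  fun_prop

lemma continuousOn_forcedOscillationDeriv (hf : IntervalIntegrable f volume 0 T) :
    ContinuousOn (forcedOscillationDeriv s f u₀ u₁) (Icc 0 T) := by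
  have := continuousOn_volterraConv (k := fun u ↦ Complex.cos (s * u)) (by fun_prop) hf
  unfold forcedOscillationDeriv
  fun_prop

variable [CompleteSpace E]

lemma hasDerivWithinAt_forcedOscillation (hs : s ≠ 0) (hf : IntervalIntegrable f volume 0 T)
    (hx : x ∈ Icc 0 T) :
    HasDerivWithinAt (forcedOscillation s f u₀ u₁) (forcedOscillationDeriv s f u₀ u₁ x)
      (Icc 0 T) x := by
  have hcos := ((hasDerivAt_cos_mul_ofReal s x).smul_const u₀).hasDerivWithinAt (s := Icc 0 T)
  have hsin := (((hasDerivAt_sin_mul_ofReal s x).div_const s).smul_const u₁).hasDerivWithinAt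
    (s := Icc 0 T)
  have hconv := (hasDerivWithinAt_volterraConv (hasDerivAt_sin_mul_ofReal s) (by fun_prop)
    (by simp) hf hx).const_smul s⁻¹
  refine ((hcos.add hsin).sub hconv).congr_deriv ?_
  rw [volterraConv_const_mul, inv_smul_smul₀ hs, mul_div_cancel_left₀ _ hs, forcedOscillationDeriv]
  module

lemma forcedOscillationDeriv_eq_add_integral (hs : s ≠ 0) (hx : 0 ≤ x)
    (hf : IntervalIntegrable f volume 0 x) :
    forcedOscillationDeriv s f u₀ u₁ x =
      u₁ + ∫ t in 0..x, (-s ^ 2 • forcedOscillation s f u₀ u₁ t - f t) := by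
  set S := volterraConv 0 (fun u ↦ Complex.sin (s * u)) f
  set h : ℝ → E := fun t ↦ Complex.cos (s * t) • u₁ - (s * Complex.sin (s * t)) • u₀
  have h_deriv : ∀ t, HasDerivAt h (-s ^ 2 • forcedOscillation s f u₀ u₁ t - s • S t) t := by
    intro t
    refine (((hasDerivAt_cos_mul_ofReal s t).smul_const u₁).sub
      (((hasDerivAt_sin_mul_ofReal s t).const_mul s).smul_const u₀)).congr_deriv ?_
    simp only [forcedOscillation]
    match_scalars <;> field_simp
    ring
  have oscillation_integrable :
      IntervalIntegrable (fun t ↦ -s ^ 2 • forcedOscillation s f u₀ u₁ t) volume 0 x :=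
    ((continuousOn_forcedOscillation hf).const_smul _).intervalIntegrable_of_Icc hx
  have S_integrable : IntervalIntegrable (fun t ↦ s • S t) volume 0 x :=
    ((continuousOn_volterraConv (by fun_prop) hf).const_smul s).intervalIntegrable_of_Icc hx
  have h_eq : h x = u₁ + ∫ t in 0..x, (-s ^ 2 • forcedOscillation s f u₀ u₁ t - s • S t) := by
    rw [intervalIntegral.integral_eq_sub_of_hasDerivAt (fun t _ ↦ h_deriv t)
      (oscillation_integrable.sub S_integrable)]
    simp [h]
  have cos_conv_eq : volterraConv 0 (fun u ↦ Complex.cos (s * u)) f x =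
      (∫ t in 0..x, f t) - ∫ t in 0..x, s • S t := by
    rw [volterraConv_eq_add_integral (hasDerivAt_cos_mul_ofReal s) (by fun_prop) hx hf]
    simp only [volterraConv_const_mul, intervalIntegral.integral_smul, mul_zero,
      Complex.ofReal_zero, Complex.cos_zero, one_smul, neg_smul, sub_eq_add_neg,
      intervalIntegral.integral_neg, S]
  rw [forcedOscillationDeriv, cos_conv_eq, intervalIntegral.integral_sub oscillation_integrable hf]
  rw [intervalIntegral.integral_sub oscillation_integrable S_integrable] at h_eq
  change h x - _ = _
  rw [h_eq]
  abel

end ForcedOscillator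

section PeriodicGreen

lemma periodicGreen_sq (T : ℝ) (s : ℂ) (x t : ℝ) :
    periodicGreen T (s ^ 2) x t =
      -(Complex.cos (s * (T / 2 - |x - t|)) / (2 * s * Complex.sin (s * (T / 2)))) := by
  have hroot : ((s ^ 2) ^ ((1 : ℂ) / 2)) ^ 2 = s ^ 2 := by
    simp
  rcases sq_eq_sq_iff_eq_or_eq_neg.1 hroot with h | h <;>
    simp only [periodicGreen, h, neg_mul, Complex.cos_neg, Complex.sin_neg] <;> push_cast <;> ring

lemma periodicGreen_zero_eq_period {T t : ℝ} (lam : ℂ) (ht : t ∈ Icc 0 T) :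
    periodicGreen T lam 0 t = periodicGreen T lam T t := by
  have h : T / 2 - |0 - t| = -(T / 2 - |T - t|) := by
    rw [zero_sub, abs_neg, abs_of_nonneg ht.1, abs_of_nonneg (sub_nonneg.2 ht.2)]
    ring
  rw [periodicGreen, periodicGreen, h, Complex.ofReal_neg, mul_neg, Complex.cos_neg]

variable {T : ℝ} {s : ℂ} {x t : ℝ}

lemma periodicGreen_sq_of_le (s : ℂ) (h : x ≤ t) :
    periodicGreen T (s ^ 2) x t =
      -(Complex.cos (s * (T / 2 + (x - t))) / (2 * s * Complex.sin (s * (T / 2)))) := by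
  rw [periodicGreen_sq, abs_of_nonpos (sub_nonpos.2 h)]
  push_cast
  ring_nf

lemma ne_zero_of_sin_mul_ne_zero {z : ℂ} (h : Complex.sin (s * z) ≠ 0) : s ≠ 0 := by
  rintro rfl
  simp at h

lemma periodicGreen_sq_of_ge (hsin : Complex.sin (s * (T / 2)) ≠ 0) (h : t ≤ x) :
    periodicGreen T (s ^ 2) x t =
      -(Complex.cos (s * (T / 2 + (x - t))) / (2 * s * Complex.sin (s * (T / 2)))) -
        s⁻¹ * Complex.sin (s * (x - t)) := by
  have hs : s ≠ 0 := ne_zero_of_sin_mul_ne_zero hsin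
  rw [periodicGreen_sq, abs_of_nonneg (sub_nonneg.2 h), Complex.ofReal_sub, mul_sub, mul_add,
    Complex.cos_sub, Complex.cos_add]
  generalize s * (T / 2 : ℂ) = h at *
  field_simp
  ring

lemma sin_mul_half_ne_zero (hT : T ≠ 0)
    (hs : ∀ n : ℕ, s ^ 2 ≠ ((2 * Real.pi * n / T : ℝ) : ℂ) ^ 2) :
    Complex.sin (s * (T / 2)) ≠ 0 := by
  intro h
  obtain ⟨k, hk⟩ := Complex.sin_eq_zero_iff.1 h
  have hTc : (T : ℂ) ≠ 0 := mod_cast hT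
  have hsk : s = ((2 * Real.pi * k / T : ℝ) : ℂ) := by
    push_cast
    field_simp
    linear_combination 2 * hk
  have hk_abs : (k : ℝ) ^ 2 = (k.natAbs : ℝ) ^ 2 := by rw [Nat.cast_natAbs, Int.cast_abs, sq_abs]
  refine hs k.natAbs ?_
  rw [hsk, ← Complex.ofReal_pow, ← Complex.ofReal_pow]
  simp only [div_pow, mul_pow, hk_abs]

variable {E : Type*} [NormedAddCommGroup E] [NormedSpace ℂ E] {f : ℝ → E}

/-- The value at `0` of the `T`-periodic solution of `-u'' - s² u = f`; it requires
`sin (s T / 2) ≠ 0`. -/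
noncomputable def periodicValue (T : ℝ) (s : ℂ) (f : ℝ → E) : E :=
  ∫ t in 0..T, (-(Complex.cos (s * (T / 2 - t)) / (2 * s * Complex.sin (s * (T / 2))))) • f t

/-- The derivative at `0` of the `T`-periodic solution of `-u'' - s² u = f`; it requires
`sin (s T / 2) ≠ 0`. -/
noncomputable def periodicVelocity (T : ℝ) (s : ℂ) (f : ℝ → E) : E :=
  ∫ t in 0..T, (Complex.sin (s * (T / 2 - t)) / (2 * Complex.sin (s * (T / 2)))) • f t

lemma smul_periodicValue_add_smul_periodicVelocity (c d : ℂ)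
    (hf : IntervalIntegrable f volume 0 T) :
    c • periodicValue T s f + d • periodicVelocity T s f =
      ∫ t in 0..T, (-(c * Complex.cos (s * (T / 2 - t)) / (2 * s * Complex.sin (s * (T / 2)))) +
        d * Complex.sin (s * (T / 2 - t)) / (2 * Complex.sin (s * (T / 2)))) • f t := by
  rw [periodicValue, periodicVelocity, ← intervalIntegral.integral_smul,
    ← intervalIntegral.integral_smul, ← intervalIntegral.integral_add]
  · refine intervalIntegral.integral_congr fun t _ ↦ ?_
    simp only [smul_smul, ← add_smul]
    ring_nf
  · exact (hf.continuousOn_smul (by fun_prop)).continuousOn_smul continuousOn_const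
  · exact (hf.continuousOn_smul (by fun_prop)).continuousOn_smul continuousOn_const

lemma cos_smul_periodicValue_add_sin_smul_periodicVelocity (hs : s ≠ 0)
    (hf : IntervalIntegrable f volume 0 T) (x : ℝ) :
    Complex.cos (s * x) • periodicValue T s f +
        (Complex.sin (s * x) / s) • periodicVelocity T s f =
      ∫ t in 0..T,
        (-(Complex.cos (s * (T / 2 + (x - t))) / (2 * s * Complex.sin (s * (T / 2))))) • f t := by
  rw [smul_periodicValue_add_smul_periodicVelocity _ _ hf]
  refine intervalIntegral.integral_congr fun t _ ↦ ?_
  have hcos : Complex.cos (s * (T / 2 + (x - t))) =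
      Complex.cos (s * x) * Complex.cos (s * (T / 2 - t)) -
        Complex.sin (s * x) * Complex.sin (s * (T / 2 - t)) := by
    rw [← Complex.cos_add]
    ring_nf
  simp only [hcos]
  congr 1
  field_simp
  ring

lemma integral_periodicGreen_smul_eq_forcedOscillation (hsin : Complex.sin (s * (T / 2)) ≠ 0)
    (hf : IntervalIntegrable f volume 0 T) (hx : x ∈ Icc 0 T) :
    ∫ t in 0..T, periodicGreen T (s ^ 2) x t • f t =
      forcedOscillation s f (periodicValue T s f) (periodicVelocity T s f) x := by
  have hs : s ≠ 0 := ne_zero_of_sin_mul_ne_zero hsin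
  set H : ℝ → ℂ := fun t ↦
    -(Complex.cos (s * (T / 2 + (x - t))) / (2 * s * Complex.sin (s * (T / 2))))
  have hfx : IntervalIntegrable f volume 0 x := intervalIntegrable_of_mem_Icc hf hx
  have hHf : IntervalIntegrable (fun t ↦ H t • f t) volume 0 T := hf.continuousOn_smul (by fun_prop)
  have hGf : IntervalIntegrable (fun t ↦ periodicGreen T (s ^ 2) x t • f t) volume 0 T :=
    hf.continuousOn_smul (by unfold periodicGreen; fun_prop)
  have before : ∫ t in 0..x, periodicGreen T (s ^ 2) x t • f t = (∫ t in 0..x, H t • f t) -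
      s⁻¹ • volterraConv 0 (fun u ↦ Complex.sin (s * u)) f x := by
    rw [volterraConv, ← intervalIntegral.integral_smul, ← intervalIntegral.integral_sub]
    · refine intervalIntegral.integral_congr fun t ht ↦ ?_
      rw [uIcc_of_le hx.1] at ht
      simp only [periodicGreen_sq_of_ge hsin ht.2, Complex.ofReal_sub, sub_smul, mul_smul, H]
    · exact intervalIntegrable_of_mem_Icc hHf hx
    · exact (hfx.continuousOn_smul (by fun_prop)).continuousOn_smul continuousOn_const
  have after : ∫ t in x..T, periodicGreen T (s ^ 2) x t • f t = ∫ t in x..T, H t • f t := by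
    refine intervalIntegral.integral_congr fun t ht ↦ ?_
    rw [uIcc_of_le hx.2] at ht
    simp only [periodicGreen_sq_of_le s ht.1, H]
  rw [forcedOscillation, cos_smul_periodicValue_add_sin_smul_periodicVelocity hs hf,
    ← integral_add_of_mem_Icc hGf hx, ← integral_add_of_mem_Icc hHf hx, before, after]
  abel

lemma cos_add_eq_of_sin_ne_zero {h : ℂ} (hsin : Complex.sin h ≠ 0) (θ : ℂ) :
    Complex.cos (h + θ) = Complex.sin (2 * h) * Complex.cos θ / (2 * Complex.sin h) +
      (Complex.cos (2 * h) - 1) * Complex.sin θ / (2 * Complex.sin h) := by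
  rw [Complex.cos_add, Complex.sin_two_mul, Complex.cos_two_mul, Complex.cos_sq']
  field_simp
  ring

lemma forcedOscillationDeriv_period (hsin : Complex.sin (s * (T / 2)) ≠ 0)
    (hf : IntervalIntegrable f volume 0 T) :
    forcedOscillationDeriv s f (periodicValue T s f) (periodicVelocity T s f) T =
      periodicVelocity T s f := by
  have hs : s ≠ 0 := ne_zero_of_sin_mul_ne_zero hsin
  have conv_eq : volterraConv 0 (fun u ↦ Complex.cos (s * u)) f T =
      (-(s * Complex.sin (s * T))) • periodicValue T s f +
        (Complex.cos (s * T) - 1) • periodicVelocity T s f := by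
    rw [smul_periodicValue_add_smul_periodicVelocity _ _ hf, volterraConv]
    refine intervalIntegral.integral_congr fun t _ ↦ ?_
    have hdouble : s * (T : ℂ) = 2 * (s * (T / 2)) := by ring
    have hadd : s * ((T - t : ℝ) : ℂ) = s * (T / 2) + s * (T / 2 - t) := by push_cast; ring
    simp only [hadd, hdouble, cos_add_eq_of_sin_ne_zero hsin]
    congr 1
    field_simp
  rw [forcedOscillationDeriv, conv_eq]
  module

end PeriodicGreen

theorem periodicGreen_solves_bvp_general {E : Type*} [NormedAddCommGroup E] [NormedSpace ℂ E]
    [CompleteSpace E] (T : ℝ) (hT : 0 < T) (lam : ℂ)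
    (hlam : ∀ n : ℕ, lam ≠ (((2 * Real.pi * n / T : ℝ) : ℂ)) ^ 2)
    (f : ℝ → E) (hf : IntervalIntegrable f volume 0 T) (y : ℝ → E)
    (hy : ∀ x ∈ Icc (0 : ℝ) T, y x = ∫ t in (0:ℝ)..T, periodicGreen T lam x t • f t) :
    ∃ yd : ℝ → E,
      (∀ x ∈ Icc (0:ℝ) T, HasDerivWithinAt y (yd x) (Icc (0:ℝ) T) x) ∧
      ContinuousOn yd (Icc (0:ℝ) T) ∧
      (∀ x ∈ Icc (0:ℝ) T, yd x = yd 0 + ∫ t in (0:ℝ)..x, (-lam • y t - f t)) ∧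
      y 0 = y T ∧ yd 0 = yd T := by
  obtain ⟨s, rfl⟩ : ∃ s : ℂ, s ^ 2 = lam := IsAlgClosed.exists_pow_nat_eq lam two_pos
  have hsin : Complex.sin (s * (T / 2)) ≠ 0 := sin_mul_half_ne_zero hT.ne' hlam
  have hs : s ≠ 0 := ne_zero_of_sin_mul_ne_zero hsin
  have hyu : EqOn y (forcedOscillation s f (periodicValue T s f) (periodicVelocity T s f))
      (Icc 0 T) := fun x hx ↦
    (hy x hx).trans (integral_periodicGreen_smul_eq_forcedOscillation hsin hf hx)
  refine ⟨forcedOscillationDeriv s f (periodicValue T s f) (periodicVelocity T s f),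
    fun x hx ↦ (hasDerivWithinAt_forcedOscillation hs hf hx).congr hyu (hyu hx),
    continuousOn_forcedOscillationDeriv hf, fun x hx ↦ ?_, ?_, ?_⟩
  · rw [forcedOscillationDeriv_zero, forcedOscillationDeriv_eq_add_integral hs hx.1
      (intervalIntegrable_of_mem_Icc hf hx)]
    congr 1
    refine intervalIntegral.integral_congr fun t ht ↦ ?_
    rw [uIcc_of_le hx.1] at ht
    simp only [hyu ⟨ht.1, ht.2.trans hx.2⟩]
  · rw [hy 0 (left_mem_Icc.2 hT.le), hy T (right_mem_Icc.2 hT.le)]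
    refine intervalIntegral.integral_congr fun t ht ↦ ?_
    rw [uIcc_of_le hT.le] at ht
    simp only [periodicGreen_zero_eq_period _ ht]
  · rw [forcedOscillationDeriv_zero, forcedOscillationDeriv_period hsin hf]

/-- For `T > 0`, `λ ∈ ℂ` with `λ ≠ (2πn/T)²` for every integer `n ≥ 0`,
and `f ∈ L²([0,T];ℂ)`, the function `y(x) = ∫₀ᵀ G(λ;x,t) f(t) dt` is continuously
differentiable on `[0,T]`, solves `-y'' - λ y = f` in the integrated sense, and
satisfies the periodic boundary conditions `y(0) = y(T)`, `y'(0) = y'(T)`. -/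
theorem periodicGreen_solves_bvp
    (T : ℝ) (hT : 0 < T) (lam : ℂ)
    (hlam : ∀ n : ℕ, lam ≠ (((2 * Real.pi * n / T : ℝ) : ℂ)) ^ 2)
    (f : ℝ → ℂ)
    (hf : IntervalIntegrable f volume 0 T)
    (hf2 : IntervalIntegrable (fun t => ‖f t‖ ^ 2) volume 0 T)
    (y : ℝ → ℂ)
    (hy : ∀ x : ℝ, y x = ∫ t in (0:ℝ)..T, periodicGreen T lam x t * f t) :
    ∃ yd : ℝ → ℂ,
      (∀ x ∈ Set.Icc (0:ℝ) T, HasDerivWithinAt y (yd x) (Set.Icc (0:ℝ) T) x) ∧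
      ContinuousOn yd (Set.Icc (0:ℝ) T) ∧
      (∀ x ∈ Set.Icc (0:ℝ) T,
        yd x = yd 0 + ∫ t in (0:ℝ)..x, (-lam * y t - f t)) ∧
      y 0 = y T ∧ yd 0 = yd T := by
  simpa only [smul_eq_mul] using
    periodicGreen_solves_bvp_general T hT lam hlam f hf y fun x _ ↦ hy x
end

section
/- For every Q > 0 there is a constant K ≥ 8, depending only on Q, with the following property. Let τ ∈ (0,1) and let (V_n)_{n≥1} be a sequence of potentials where V_n : ℝ → ℝ is T_n-periodic and locally square-integrable, with T_n ≥ 1 and T_n dividing T_{n+1} (i.e. T_{n+1}/T_n a positive integer) for every n, ‖V_n‖_B ≤ Q for every n, and Σ_{V_n} ⊆ [1, ∞) for every n. Assume Σ_{n=1}^∞ T_{n+1}^6 e^{K T_{n+1}} ‖V_n − V_{n+1}‖_B < (1 − τ)/(3 K⁴), where ‖V_n − V_{n+1}‖_B is computed over the period T_{n+1}. Set δ₀ = min( K^{−1} T₁^{−3} e^{−K T₁}, (1 − τ)/3 ). Then for every N ≥ 1, every x ∈ Σ_{V_N}, and every δ with 0 < δ ≤ δ₀, the Lebesgue measure of (x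 − δ, x + δ) ∩ Σ_{V_N} is at least τ δ. -/
open MeasureTheory

/-- `y` is a solution of `-y'' + V y = z y` on `ℝ`, with derivative `yd`:
`y` is continuously differentiable and `yd x = yd 0 + ∫₀ˣ (V t - z) y t dt`. -/
def IsSolution (V : ℝ → ℝ) (z : ℂ) (y yd : ℝ → ℂ) : Prop :=
  (∀ x : ℝ, HasDerivAt y (yd x) x) ∧ Continuous yd ∧
    ∀ x : ℝ, yd x = yd 0 + ∫ t in (0:ℝ)..x, ((V t : ℂ) - z) * y t

/-- `Δ` is the discriminant of the `T`-periodic potential `V`: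
`Δ z = y_N(z,T) + y_D'(z,T)` where `y_N`, `y_D` are the Neumann and Dirichlet solutions. -/
def IsDiscriminant (T : ℝ) (V : ℝ → ℝ) (Δ : ℂ → ℂ) : Prop :=
  ∀ z : ℂ, ∃ yN yNd yD yDd : ℝ → ℂ,
    IsSolution V z yN yNd ∧ IsSolution V z yD yDd ∧
    yN 0 = 1 ∧ yNd 0 = 0 ∧ yD 0 = 0 ∧ yDd 0 = 1 ∧
    Δ z = yN T + yDd T

/-- The Besicovitch norm of a `T`-periodic potential: `((1/T) ∫₀ᵀ |W|²)^{1/2}`. -/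
noncomputable def besNorm (T : ℝ) (W : ℝ → ℝ) : ℝ :=
  Real.sqrt ((1 / T) * ∫ t in (0:ℝ)..T, (W t) ^ 2)

/-- The spectrum of the periodic Schrödinger operator, `Σ_V = {E ∈ ℝ : |Δ(E)| ≤ 2}`. -/
def specSet (Δ : ℂ → ℂ) : Set ℝ := {E : ℝ | ‖Δ (E : ℂ)‖ ≤ 2}

/-!
Let `u`, `v` be the Neumann and Dirichlet solutions at an energy `E`, and `R` a period of `V`.
Variation of constants expresses `Δ'(E)` as a pairing of the transfer matrix with the Gram matrix of
`u` and `v` in `L²(0, R)`, and since the transfer matrix has determinant `1` this gives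
`Δ'² ≥ G (4 - Δ²)` with `G` the Gram determinant, which is at least `e^{-CR} E⁻³`.
So `√(2 - Δ)` has a slope bounded below inside the bands; as `Δ` is Lipschitz with a constant `L`,
itself exponential in `R`, every point of the spectrum has a one-sided neighbourhood of length
`1 / L` in the spectrum, and the set of energies with `2 - ε ≤ |Δ| ≤ 2` has measure `O(√(ε / G))`
on intervals of that length. A perturbation changing `Δ` by at most `ε` therefore moves the bands by
`O(√(ε / G))` and destroys only that much of them.

Given the scale `δ`, start from the last `n` with `δ ≤ 1 / L(T_n)`, where one-sided neighbourhoods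
in the spectrum have length at least `δ`. From there to `N` each step, performed over the longer of
the two periods, costs an exponentially small fraction of `(1 - τ) δ`. Consecutive operators with
the same period are compared in a single step, and otherwise the period at least doubles, so the
costs decay geometrically.

Local integrability of `V²` does not give measurability of `V`, on which the integrals in the
equation depend; it is recovered from `0 ∉ Σ_V`. If `V` stops being measurable at `a`, the integral
takes its junk value `0` beyond `a`. For `a = 0` this makes the solutions affine and `Δ(0) = 2`; for
`a > 0` the Neumann solution at energy `i` would satisfy `y'(a) = 0`, so that `i` would be an
eigenvalue of a selfadjoint problem on `(0, a)`.
-/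

section Development

open Set Filter Topology Interval

section Primitive

variable {E F : Type*} [NormedAddCommGroup E] [NormedSpace ℝ E]
  [NormedAddCommGroup F] [NormedSpace ℝ F] {a b c d : ℝ}

/-- `f` is an absolutely continuous function with density `f'` on the interval with endpoints
`a` and `b`, in the integrated form in which solutions of an equation with integrable coefficients
arise. -/
structure IsPrimitiveOn (f f' : ℝ → E) (a b : ℝ) : Prop where
  intervalIntegrable : IntervalIntegrable f' volume a b
  eq_add_integral : ∀ x ∈ [[a, b]], f x = f a + ∫ t in a..x, f' t

namespace IsPrimitiveOn

variable {f f' g g' : ℝ → E}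

lemma integral_eq_sub (hf : IsPrimitiveOn f f' a b) : ∫ t in a..b, f' t = f b - f a := by
  rw [hf.eq_add_integral b right_mem_uIcc, add_sub_cancel_left]

lemma mono (hf : IsPrimitiveOn f f' a b) (hc : c ∈ [[a, b]]) (hd : d ∈ [[a, b]]) :
    IsPrimitiveOn f f' c d := by
  have hi {u v : ℝ} (hu : u ∈ [[a, b]]) (hv : v ∈ [[a, b]]) : IntervalIntegrable f' volume u v :=
    hf.intervalIntegrable.mono_set (uIcc_subset_uIcc hu hv)
  refine ⟨hi hc hd, fun x hx => ?_⟩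
  have hx' := uIcc_subset_uIcc hc hd hx
  rw [hf.eq_add_integral x hx', hf.eq_add_integral c hc, add_assoc,
    intervalIntegral.integral_add_adjacent_intervals (hi left_mem_uIcc hc) (hi hc hx')]

lemma add (hf : IsPrimitiveOn f f' a b) (hg : IsPrimitiveOn g g' a b) :
    IsPrimitiveOn (fun x => f x + g x) (fun x => f' x + g' x) a b := by
  refine ⟨hf.intervalIntegrable.add hg.intervalIntegrable, fun x hx => ?_⟩
  rw [hf.eq_add_integral x hx, hg.eq_add_integral x hx, intervalIntegral.integral_add
    (hf.mono left_mem_uIcc hx).intervalIntegrable (hg.mono left_mem_uIcc hx).intervalIntegrable]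
  abel

lemma continuousLinearMap_comp [CompleteSpace E] [CompleteSpace F] (L : E →L[ℝ] F)
    (hf : IsPrimitiveOn f f' a b) : IsPrimitiveOn (fun x => L (f x)) (fun x => L (f' x)) a b :=
  ⟨⟨L.integrable_comp hf.intervalIntegrable.1, L.integrable_comp hf.intervalIntegrable.2⟩,
    fun x hx => by
      rw [L.intervalIntegral_comp_comm (hf.mono left_mem_uIcc hx).intervalIntegrable,
        hf.eq_add_integral x hx, map_add]⟩

lemma neg (hf : IsPrimitiveOn f f' a b) : IsPrimitiveOn (fun x => -f x) (fun x => -f' x) a b := by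
  refine ⟨hf.intervalIntegrable.neg, fun x hx => ?_⟩
  rw [hf.eq_add_integral x hx, intervalIntegral.integral_neg, neg_add]

lemma sub (hf : IsPrimitiveOn f f' a b) (hg : IsPrimitiveOn g g' a b) :
    IsPrimitiveOn (fun x => f x - g x) (fun x => f' x - g' x) a b := by
  simpa only [sub_eq_add_neg] using hf.add hg.neg

end IsPrimitiveOn

lemma isPrimitiveOn_of_hasDerivAt [CompleteSpace E] {f f' : ℝ → E}
    (hf : ∀ x, HasDerivAt f (f' x) x) (hf' : Continuous f') (a b : ℝ) : IsPrimitiveOn f f' a b :=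
  ⟨hf'.intervalIntegrable a b, fun x _ => by
    rw [intervalIntegral.integral_eq_sub_of_hasDerivAt (fun t _ => hf t)
      (hf'.intervalIntegrable a x), add_sub_cancel]⟩

lemma isPrimitiveOn_integral {f' : ℝ → E} (hf' : IntervalIntegrable f' volume a b) :
    IsPrimitiveOn (fun x => ∫ t in a..x, f' t) f' a b :=
  ⟨hf', fun x _ => by rw [intervalIntegral.integral_same, zero_add]⟩

lemma absolutelyContinuousOnInterval_lipschitzOn_comp {X Y : Type*} [PseudoMetricSpace X]
    [PseudoMetricSpace Y] {φ : X → Y} {K : NNReal} {s : Set X} (hφ : LipschitzOnWith K φ s)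
    {f : ℝ → X} (hf : AbsolutelyContinuousOnInterval f a b) (hs : MapsTo f [[a, b]] s) :
    AbsolutelyContinuousOnInterval (fun x => φ (f x)) a b := by
  have hK : Tendsto (fun E : ℕ × (ℕ → ℝ × ℝ) => (K : ℝ) *
      ∑ i ∈ Finset.range E.1, dist (f (E.2 i).1) (f (E.2 i).2))
      (AbsolutelyContinuousOnInterval.totalLengthFilter ⊓
        𝓟 (AbsolutelyContinuousOnInterval.disjWithin a b)) (𝓝 0) := by
    simpa using Tendsto.const_mul (K : ℝ) hf
  refine squeeze_zero' (.of_forall fun E => Finset.sum_nonneg fun _ _ => dist_nonneg) ?_ hK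
  filter_upwards [mem_inf_of_right (mem_principal_self _)] with E hE
  rw [Finset.mul_sum]
  exact Finset.sum_le_sum fun i hi =>
    hφ.dist_le_mul _ (hs (hE.1 i hi).1) _ (hs (hE.1 i hi).2)

namespace IsPrimitiveOn

variable {f f' g g' : ℝ → ℝ}

lemma absolutelyContinuousOnInterval (hf : IsPrimitiveOn f f' a b) :
    AbsolutelyContinuousOnInterval f a b := by
  have hconst : AbsolutelyContinuousOnInterval (fun _ : ℝ => f a) a b :=
    contDiff_const.contDiffOn.absolutelyContinuousOnInterval
  have hsum := hconst.fun_add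
    (hf.intervalIntegrable.absolutelyContinuousOnInterval_intervalIntegral left_mem_uIcc)
  refine Tendsto.congr' ?_ hsum
  filter_upwards [mem_inf_of_right (mem_principal_self _)] with E hE
  refine Finset.sum_congr rfl fun i hi => ?_
  rw [← hf.eq_add_integral _ (hE.1 i hi).1, ← hf.eq_add_integral _ (hE.1 i hi).2]

lemma continuousOn (hf : IsPrimitiveOn f f' a b) : ContinuousOn f [[a, b]] :=
  hf.absolutelyContinuousOnInterval.continuousOn

lemma ae_hasDerivAt (hf : IsPrimitiveOn f f' a b) :
    ∀ᵐ x, x ∈ Ι a b → HasDerivAt f (f' x) x := by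
  have hne : ∀ᵐ x : ℝ, x ≠ max a b := by simp [ae_iff]
  filter_upwards [hf.intervalIntegrable.ae_hasDerivAt_integral, hne] with x hx hxb hxI
  refine ((hx (uIoc_subset_uIcc hxI) a left_mem_uIcc).const_add (f a)).congr_of_eventuallyEq ?_
  filter_upwards [Ioo_mem_nhds hxI.1 (lt_of_le_of_ne hxI.2 hxb)] with y hy
  exact hf.eq_add_integral y (Ioo_subset_Icc_self hy)

lemma of_ae_hasDerivAt (hf : AbsolutelyContinuousOnInterval f a b)
    (hf' : IntervalIntegrable f' volume a b) (h : ∀ᵐ x, x ∈ Ι a b → HasDerivAt f (f' x) x) :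
    IsPrimitiveOn f f' a b := by
  refine ⟨hf', fun x hx => ?_⟩
  have hderiv : ∫ t in a..x, f' t = ∫ t in a..x, deriv f t := by
    refine intervalIntegral.integral_congr_ae ?_
    filter_upwards [h] with t ht htI
    exact (ht (uIoc_subset_uIoc_of_uIcc_subset_uIcc (uIcc_subset_uIcc_left hx) htI)).deriv.symm
  rw [hderiv, (hf.mono (uIcc_subset_uIcc left_mem_uIcc hx)).integral_deriv_eq_sub]
  ring

lemma const_mul (k : ℝ) (hf : IsPrimitiveOn f f' a b) :
    IsPrimitiveOn (fun x => k * f x) (fun x => k * f' x) a b := by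
  simpa using hf.continuousLinearMap_comp (k • ContinuousLinearMap.id ℝ ℝ)

lemma mul (hf : IsPrimitiveOn f f' a b) (hg : IsPrimitiveOn g g' a b) :
    IsPrimitiveOn (fun x => f x * g x) (fun x => f' x * g x + f x * g' x) a b := by
  refine of_ae_hasDerivAt
    (hf.absolutelyContinuousOnInterval.fun_mul hg.absolutelyContinuousOnInterval)
    ((hf.intervalIntegrable.mul_continuousOn hg.continuousOn).add
      (hg.intervalIntegrable.continuousOn_mul hf.continuousOn)) ?_
  filter_upwards [hf.ae_hasDerivAt, hg.ae_hasDerivAt] with x hfx hgx hx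
  exact (hfx hx).mul (hgx hx)

lemma exp (hf : IsPrimitiveOn f f' a b) :
    IsPrimitiveOn (fun x => Real.exp (f x)) (fun x => Real.exp (f x) * f' x) a b := by
  obtain ⟨K, hK⟩ := Real.contDiff_exp.locallyLipschitz.locallyLipschitzOn
    |>.exists_lipschitzOnWith_of_compact (isCompact_uIcc.image_of_continuousOn hf.continuousOn)
  have hac := absolutelyContinuousOnInterval_lipschitzOn_comp hK
    hf.absolutelyContinuousOnInterval (mapsTo_image f _)
  refine of_ae_hasDerivAt hac (hf.intervalIntegrable.continuousOn_mul hac.continuousOn) ?_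
  filter_upwards [hf.ae_hasDerivAt] with x hfx hx
  exact (hfx hx).exp

/-- Backward Grönwall inequality; the forward one is the same statement for `-f` and `-κ`. -/
lemma le_mul_exp_integral (hab : a ≤ b) (hf : IsPrimitiveOn f f' a b) {κ : ℝ → ℝ}
    (hκ : IntervalIntegrable κ volume a b) (h : ∀ t ∈ Icc a b, 0 ≤ f' t + κ t * f t) :
    f a ≤ f b * Real.exp (∫ t in a..b, κ t) := by
  have hprod := (hf.mul (isPrimitiveOn_integral hκ).exp).integral_eq_sub
  have hnonneg : 0 ≤ ∫ x in a..b, (f' x * Real.exp (∫ t in a..x, κ t) +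
      f x * (Real.exp (∫ t in a..x, κ t) * κ x)) := by
    refine intervalIntegral.integral_nonneg hab fun t ht => ?_
    linarith [mul_nonneg (h t ht) (Real.exp_pos (∫ s in a..t, κ s)).le]
  rw [hprod, intervalIntegral.integral_same, Real.exp_zero, mul_one] at hnonneg
  linarith

lemma le_mul_exp_of_abs_le {κ : ℝ → ℝ} (hf : IsPrimitiveOn f f' a b)
    (hκ : IntervalIntegrable κ volume a b) (hκ0 : ∀ t ∈ [[a, b]], 0 ≤ κ t)
    (h : ∀ t ∈ [[a, b]], |f' t| ≤ κ t * f t) :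
    f b ≤ f a * Real.exp |∫ t in a..b, κ t| := by
  rcases le_total a b with hab | hab
  · rw [uIcc_of_le hab] at hκ0 h
    have hle := hf.neg.le_mul_exp_integral hab hκ.neg fun t ht => by
      have := le_of_abs_le (h t ht)
      simp only [Pi.neg_apply]
      linarith
    simp only [Pi.neg_apply, intervalIntegral.integral_neg, Real.exp_neg] at hle
    rw [abs_of_nonneg (intervalIntegral.integral_nonneg hab hκ0)]
    rw [neg_mul, neg_le_neg_iff, mul_inv_le_iff₀ (Real.exp_pos _)] at hle
    exact hle
  · have hle := (hf.mono right_mem_uIcc left_mem_uIcc).le_mul_exp_integral hab hκ.symm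
      fun t ht => by
        have := neg_le_of_abs_le (h t (uIcc_of_ge hab ▸ ht))
        linarith
    rwa [intervalIntegral.integral_symm, abs_neg, abs_of_nonneg
      (intervalIntegral.integral_nonneg hab (uIcc_of_ge hab ▸ hκ0))]

end IsPrimitiveOn

end Primitive

section RealEquation

/-- `y` is a real solution, with derivative `y'`, of `y'' = p y` on the whole line. The potential
`p` need not be integrable, only `p y` is. -/
structure IsRealSolution (p y y' : ℝ → ℝ) : Prop where
  hasDerivAt : ∀ x, HasDerivAt y (y' x) x
  isPrimitiveOn_deriv : ∀ a b, IsPrimitiveOn y' (fun t => p t * y t) a b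

namespace IsRealSolution

variable {p q f f' g g' y y' : ℝ → ℝ}

lemma continuous (h : IsRealSolution p y y') : Continuous y :=
  continuous_iff_continuousAt.2 fun x => (h.hasDerivAt x).continuousAt

lemma continuous_deriv (h : IsRealSolution p y y') : Continuous y' :=
  continuous_iff_continuousAt.2 fun x =>
    (h.isPrimitiveOn_deriv (x - 1) (x + 1)).continuousOn.continuousAt <| by
      rw [uIcc_of_le (by linarith)]
      exact Icc_mem_nhds (by linarith) (by linarith)

lemma isPrimitiveOn (h : IsRealSolution p y y') (a b : ℝ) : IsPrimitiveOn y y' a b :=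
  isPrimitiveOn_of_hasDerivAt h.hasDerivAt h.continuous_deriv a b

lemma isPrimitiveOn_wronskian (hf : IsRealSolution p f f') (hg : IsRealSolution q g g') (a b : ℝ) :
    IsPrimitiveOn (fun x => f x * g' x - f' x * g x)
      (fun x => (q x - p x) * (f x * g x)) a b := by
  convert ((hf.isPrimitiveOn a b).mul (hg.isPrimitiveOn_deriv a b)).sub
    ((hf.isPrimitiveOn_deriv a b).mul (hg.isPrimitiveOn a b)) using 2
  ring

lemma const_mul (k : ℝ) (hf : IsRealSolution p f f') :
    IsRealSolution p (fun x => k * f x) (fun x => k * f' x) := by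
  refine ⟨fun x => (hf.hasDerivAt x).const_mul k, fun a b => ?_⟩
  convert (hf.isPrimitiveOn_deriv a b).const_mul k using 2
  ring

lemma sub (hf : IsRealSolution p f f') (hg : IsRealSolution p g g') :
    IsRealSolution p (fun x => f x - g x) (fun x => f' x - g' x) := by
  refine ⟨fun x => (hf.hasDerivAt x).sub (hg.hasDerivAt x), fun a b => ?_⟩
  convert (hf.isPrimitiveOn_deriv a b).sub (hg.isPrimitiveOn_deriv a b) using 2
  ring

lemma comp_add_const {T : ℝ} (hp : Function.Periodic p T) (h : IsRealSolution p y y') :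
    IsRealSolution p (fun x => y (x + T)) (fun x => y' (x + T)) := by
  have hper : (fun t => p t * y (t + T)) = fun t => p (t + T) * y (t + T) := by
    simp only [hp _]
  refine ⟨fun x => (h.hasDerivAt (x + T)).comp_add_const x T, fun a b => ?_⟩
  have hT := h.isPrimitiveOn_deriv (a + T) (b + T)
  rw [hper]
  refine ⟨by simpa using hT.intervalIntegrable.comp_add_right T, fun x hx => ?_⟩
  rw [intervalIntegral.integral_comp_add_right (fun t => p t * y t)]
  exact hT.eq_add_integral _ (by rw [← image_add_const_uIcc]; exact mem_image_of_mem _ hx)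

end IsRealSolution

/-- The solutions `u`, `v` of `y'' = p y` with Neumann and Dirichlet initial data at `0`, that is,
the columns of the transfer matrix. -/
structure FundamentalSystem (p : ℝ → ℝ) where
  u : ℝ → ℝ
  u' : ℝ → ℝ
  v : ℝ → ℝ
  v' : ℝ → ℝ
  isRealSolution_u : IsRealSolution p u u'
  isRealSolution_v : IsRealSolution p v v'
  u_zero : u 0 = 1
  u'_zero : u' 0 = 0
  v_zero : v 0 = 0
  v'_zero : v' 0 = 1

namespace FundamentalSystem

variable {p q : ℝ → ℝ} (F : FundamentalSystem p) (G : FundamentalSystem q)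

/-- The trace of the transfer matrix from `0` to `t`. -/
def trace (t : ℝ) : ℝ := F.u t + F.v' t

lemma wronskian_eq_one (t : ℝ) : F.u t * F.v' t - F.u' t * F.v t = 1 := by
  have h := (F.isRealSolution_u.isPrimitiveOn_wronskian F.isRealSolution_v 0 t).integral_eq_sub
  simp only [sub_self, zero_mul, intervalIntegral.integral_zero, F.u_zero, F.v'_zero, F.u'_zero]
    at h
  linarith

section VariationOfConstants

variable {y y' : ℝ → ℝ} (hy : IsRealSolution q y y')
include hy

lemma wronskian_u_eq (t : ℝ) : F.u t * y' t - F.u' t * y t =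
    y' 0 + ∫ s in (0 : ℝ)..t, (q s - p s) * (F.u s * y s) := by
  rw [(F.isRealSolution_u.isPrimitiveOn_wronskian hy 0 t).integral_eq_sub, F.u_zero, F.u'_zero]
  ring

lemma wronskian_v_eq (t : ℝ) : F.v t * y' t - F.v' t * y t =
    -y 0 + ∫ s in (0 : ℝ)..t, (q s - p s) * (F.v s * y s) := by
  rw [(F.isRealSolution_v.isPrimitiveOn_wronskian hy 0 t).integral_eq_sub, F.v_zero, F.v'_zero]
  ring

theorem variation_of_constants (t : ℝ) : y t = y 0 * F.u t + y' 0 * F.v t +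
    F.v t * (∫ s in (0 : ℝ)..t, (q s - p s) * (F.u s * y s)) -
    F.u t * ∫ s in (0 : ℝ)..t, (q s - p s) * (F.v s * y s) := by
  linear_combination F.v t * F.wronskian_u_eq hy t - F.u t * F.wronskian_v_eq hy t -
    y t * F.wronskian_eq_one t

theorem variation_of_constants_deriv (t : ℝ) : y' t = y 0 * F.u' t + y' 0 * F.v' t +
    F.v' t * (∫ s in (0 : ℝ)..t, (q s - p s) * (F.u s * y s)) -
    F.u' t * ∫ s in (0 : ℝ)..t, (q s - p s) * (F.v s * y s) := by
  linear_combination F.v' t * F.wronskian_u_eq hy t - F.u' t * F.wronskian_v_eq hy t -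
    y' t * F.wronskian_eq_one t

end VariationOfConstants

lemma eq_combination {y y' : ℝ → ℝ} (hy : IsRealSolution p y y') (t : ℝ) :
    y t = y 0 * F.u t + y' 0 * F.v t := by
  simpa using F.variation_of_constants hy t

lemma deriv_eq_combination {y y' : ℝ → ℝ} (hy : IsRealSolution p y y') (t : ℝ) :
    y' t = y 0 * F.u' t + y' 0 * F.v' t := by
  simpa using F.variation_of_constants_deriv hy t

theorem trace_sub_trace (t : ℝ) : G.trace t - F.trace t =
    F.v t * (∫ s in (0 : ℝ)..t, (q s - p s) * (F.u s * G.u s)) -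
    F.u t * (∫ s in (0 : ℝ)..t, (q s - p s) * (F.v s * G.u s)) +
    F.v' t * (∫ s in (0 : ℝ)..t, (q s - p s) * (F.u s * G.v s)) -
    F.u' t * ∫ s in (0 : ℝ)..t, (q s - p s) * (F.v s * G.v s) := by
  have hu := F.variation_of_constants G.isRealSolution_u t
  have hv := F.variation_of_constants_deriv G.isRealSolution_v t
  rw [G.u_zero, G.u'_zero] at hu
  rw [G.v_zero, G.v'_zero] at hv
  rw [trace, trace]
  linear_combination hu + hv

section Periodic

variable {T : ℝ} (hp : Function.Periodic p T)
include hp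

/-- Cayley–Hamilton for the transfer matrix over one period. -/
lemma trace_add_period_add_period (t : ℝ) :
    F.trace (t + T + T) = F.trace T * F.trace (t + T) - F.trace t := by
  have hu := F.isRealSolution_u.comp_add_const hp
  have hv := F.isRealSolution_v.comp_add_const hp
  have h₁ := F.eq_combination hu
  have h₂ := F.deriv_eq_combination hu
  have h₃ := F.eq_combination hv
  have h₄ := F.deriv_eq_combination hv
  simp only [zero_add] at h₁ h₂ h₃ h₄
  simp only [trace, h₁, h₂, h₃, h₄]
  linear_combination (-F.u t - F.v' t) * F.wronskian_eq_one T

theorem trace_nat_mul_period (k : ℕ) :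
    F.trace (k * T) = 2 * (Polynomial.Chebyshev.T ℝ k).eval (F.trace T / 2) := by
  induction k using Nat.twoStepInduction with
  | zero => norm_num [trace, F.u_zero, F.v'_zero]
  | one => norm_num; ring
  | more k hk hk' =>
    have h := F.trace_add_period_add_period hp (k * T)
    push_cast at hk' ⊢
    rw [Polynomial.Chebyshev.T_add_two, Polynomial.eval_sub, Polynomial.eval_mul,
      Polynomial.eval_mul, Polynomial.eval_X, Polynomial.eval_ofNat,
      show (k + 2 : ℝ) * T = k * T + T + T by ring, h, hk,
      show (k : ℝ) * T + T = (k + 1) * T by ring, hk']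
    ring

lemma abs_trace_nat_mul_period_le_two_iff {k : ℕ} (hk : k ≠ 0) :
    |F.trace (k * T)| ≤ 2 ↔ |F.trace T| ≤ 2 := by
  have hcheb := Polynomial.Chebyshev.abs_eval_T_real_le_one_iff (Int.natCast_ne_zero.2 hk)
    (F.trace T / 2)
  rw [F.trace_nat_mul_period hp, abs_mul, abs_two]
  rw [abs_div, abs_two, div_le_one two_pos] at hcheb
  rw [hcheb]
  constructor <;> intro h <;> linarith

end Periodic

end FundamentalSystem

end RealEquation

section Energy

variable {V : ℝ → ℝ} {E R I : ℝ}

lemma abs_integral_mul_mul_le {w f g : ℝ → ℝ} {A B : ℝ} (hR : 0 ≤ R)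
    (hw : IntervalIntegrable w volume 0 R) (hf : ∀ t ∈ Icc 0 R, |f t| ≤ A)
    (hg : ∀ t ∈ Icc 0 R, |g t| ≤ B) :
    |∫ t in (0 : ℝ)..R, w t * (f t * g t)| ≤ A * B * ∫ t in (0 : ℝ)..R, |w t| := by
  rw [← intervalIntegral.integral_const_mul, ← Real.norm_eq_abs]
  refine intervalIntegral.norm_integral_le_of_norm_le hR (.of_forall fun t ht => ?_)
    (hw.abs.const_mul _)
  have ht' := Ioc_subset_Icc_self ht
  rw [Real.norm_eq_abs, abs_mul, abs_mul, mul_comm]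
  exact mul_le_mul_of_nonneg_right (mul_le_mul (hf t ht') (hg t ht') (abs_nonneg _)
    ((abs_nonneg _).trans (hf t ht'))) (abs_nonneg _)

theorem IsRealSolution.energy_le {y y' : ℝ → ℝ} (hE : 1 / 4 ≤ E)
    (hV : IntervalIntegrable V volume 0 R) (hI : ∫ t in (0 : ℝ)..R, |V t| ≤ I)
    (hy : IsRealSolution (fun t => V t - E) y y') {s t : ℝ} (hs : s ∈ Icc 0 R)
    (ht : t ∈ Icc 0 R) :
    y' t ^ 2 + E * y t ^ 2 ≤ (y' s ^ 2 + E * y s ^ 2) * Real.exp (2 * I) := by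
  have hR : 0 ≤ R := hs.1.trans hs.2
  rw [← uIcc_of_le hR] at hs ht
  have hprim : IsPrimitiveOn (fun x => y' x ^ 2 + E * y x ^ 2) (fun x => 2 * (V x * (y x * y' x)))
      s t := by
    have h' := hy.isPrimitiveOn_deriv s t
    have h := hy.isPrimitiveOn s t
    convert (h'.mul h').add ((h.mul h).const_mul E) using 2 <;> ring
  have hκ : IntervalIntegrable (fun x => 2 * |V x|) volume s t :=
    (hV.mono_set (uIcc_subset_uIcc hs ht)).abs.const_mul 2
  have hexp : |∫ x in s..t, (2 * |V x|)| ≤ 2 * I := by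
    rw [intervalIntegral.integral_const_mul, abs_mul, abs_two]
    have hmono := intervalIntegral.abs_integral_mono_interval
      (uIoc_subset_uIoc_of_uIcc_subset_uIcc (uIcc_subset_uIcc hs ht))
      (.of_forall fun x => abs_nonneg (V x)) hV.abs
    rw [abs_of_nonneg (intervalIntegral.integral_nonneg hR fun x _ => abs_nonneg (V x))] at hmono
    linarith
  refine (hprim.le_mul_exp_of_abs_le hκ (fun x _ => by positivity) fun x _ => ?_).trans
    (mul_le_mul_of_nonneg_left (Real.exp_le_exp.2 hexp) (by positivity))
  have hyy : 2 * |y x * y' x| ≤ 2 * (y' x ^ 2 + E * y x ^ 2) := by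
    rw [abs_mul, ← sq_abs (y x), ← sq_abs (y' x)]
    nlinarith [sq_nonneg (|y x| - 2 * |y' x|), sq_nonneg |y x|]
  rw [abs_mul, abs_mul, abs_two]
  nlinarith [mul_le_mul_of_nonneg_left hyy (abs_nonneg (V x))]

namespace FundamentalSystem

section Bounds

variable (F : FundamentalSystem fun t => V t - E) (hE : 1 / 4 ≤ E)
  (hV : IntervalIntegrable V volume 0 R) (hI : ∫ t in (0 : ℝ)..R, |V t| ≤ I) {t : ℝ}
  (ht : t ∈ Icc 0 R)
include hE hV hI ht

lemma energy_u_le : F.u' t ^ 2 + E * F.u t ^ 2 ≤ E * Real.exp I ^ 2 := by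
  simpa [F.u_zero, F.u'_zero, ← Real.exp_nat_mul] using
    F.isRealSolution_u.energy_le hE hV hI (left_mem_Icc.2 (ht.1.trans ht.2)) ht

lemma energy_v_le : F.v' t ^ 2 + E * F.v t ^ 2 ≤ Real.exp I ^ 2 := by
  simpa [F.v_zero, F.v'_zero, ← Real.exp_nat_mul] using
    F.isRealSolution_v.energy_le hE hV hI (left_mem_Icc.2 (ht.1.trans ht.2)) ht

lemma abs_u_le : |F.u t| ≤ Real.exp I := by
  refine abs_le_of_sq_le_sq ?_ (Real.exp_pos I).le
  refine le_of_mul_le_mul_left ?_ (show 0 < E by linarith)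
  linarith [F.energy_u_le hE hV hI ht, sq_nonneg (F.u' t)]

lemma abs_u'_le : |F.u' t| ≤ √E * Real.exp I := by
  refine abs_le_of_sq_le_sq ?_ (by positivity)
  rw [mul_pow, Real.sq_sqrt (by linarith)]
  have : 0 ≤ E * F.u t ^ 2 := mul_nonneg (by linarith) (sq_nonneg _)
  linarith [F.energy_u_le hE hV hI ht]

lemma abs_v_le : |F.v t| ≤ Real.exp I / √E := by
  have hE0 : 0 < E := by linarith
  refine abs_le_of_sq_le_sq ?_ (by positivity)
  rw [div_pow, Real.sq_sqrt hE0.le, le_div_iff₀ hE0]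
  linarith [F.energy_v_le hE hV hI ht, sq_nonneg (F.v' t)]

lemma abs_v'_le : |F.v' t| ≤ Real.exp I := by
  refine abs_le_of_sq_le_sq ?_ (Real.exp_pos I).le
  have : 0 ≤ E * F.v t ^ 2 := mul_nonneg (by linarith) (sq_nonneg _)
  linarith [F.energy_v_le hE hV hI ht]

end Bounds

theorem abs_trace_sub_trace_le {V₁ V₂ : ℝ → ℝ} {E₁ E₂ ω : ℝ}
    (F : FundamentalSystem fun t => V₁ t - E₁) (G : FundamentalSystem fun t => V₂ t - E₂)
    (hR : 0 ≤ R) (hE₁ : 1 / 4 ≤ E₁) (hE₂ : 1 / 4 ≤ E₂) (hω : 0 < ω) (hω₁ : ω ≤ √E₁)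
    (hω₂ : ω ≤ √E₂) (hV₁ : IntervalIntegrable V₁ volume 0 R)
    (hV₂ : IntervalIntegrable V₂ volume 0 R) (hI₁ : ∫ t in (0 : ℝ)..R, |V₁ t| ≤ I)
    (hI₂ : ∫ t in (0 : ℝ)..R, |V₂ t| ≤ I) :
    |G.trace R - F.trace R| ≤ 4 * Real.exp (3 * I) / ω *
      ∫ t in (0 : ℝ)..R, |V₂ t - E₂ - (V₁ t - E₁)| := by
  have hw : IntervalIntegrable (fun t => V₂ t - E₂ - (V₁ t - E₁)) volume 0 R :=
    (hV₂.sub intervalIntegrable_const).sub (hV₁.sub intervalIntegrable_const)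
  have hRmem : R ∈ Icc 0 R := right_mem_Icc.2 hR
  have huF t (ht : t ∈ Icc 0 R) := F.abs_u_le hE₁ hV₁ hI₁ ht
  have hvF t (ht : t ∈ Icc 0 R) := F.abs_v_le hE₁ hV₁ hI₁ ht
  have huG t (ht : t ∈ Icc 0 R) := G.abs_u_le hE₂ hV₂ hI₂ ht
  have hvG t (ht : t ∈ Icc 0 R) := G.abs_v_le hE₂ hV₂ hI₂ ht
  set J : ℝ := ∫ t in (0 : ℝ)..R, |V₂ t - E₂ - (V₁ t - E₁)|
  set e : ℝ := Real.exp I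
  have hJ : 0 ≤ J := intervalIntegral.integral_nonneg hR fun _ _ => abs_nonneg _
  have : 0 ≤ e := (Real.exp_pos I).le
  have hprod {a X A B : ℝ} (ha : |a| ≤ A) (hX : |X| ≤ B * J) (hAB : A * B ≤ e ^ 3 / ω) :
      |a * X| ≤ e ^ 3 / ω * J := by
    rw [abs_mul]
    calc |a| * |X| ≤ A * (B * J) := mul_le_mul ha hX (abs_nonneg _) ((abs_nonneg _).trans ha)
      _ = A * B * J := by ring
      _ ≤ e ^ 3 / ω * J := mul_le_mul_of_nonneg_right hAB hJ
  have : 0 < √E₁ := hω.trans_le hω₁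
  have hdiv {s : ℝ} (hs : ω ≤ s) : e ^ 3 / s ≤ e ^ 3 / ω := by gcongr
  have h₁ := hprod (hvF R hRmem) (abs_integral_mul_mul_le hR hw huF huG)
    (by convert hdiv hω₁ using 1; ring)
  have h₂ := hprod (huF R hRmem) (abs_integral_mul_mul_le hR hw hvF huG)
    (by convert hdiv hω₁ using 1; ring)
  have h₃ := hprod (F.abs_v'_le hE₁ hV₁ hI₁ hRmem) (abs_integral_mul_mul_le hR hw huF hvG)
    (by convert hdiv hω₂ using 1; ring)
  have h₄ := hprod (F.abs_u'_le hE₁ hV₁ hI₁ hRmem) (abs_integral_mul_mul_le hR hw hvF hvG)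
    (by convert hdiv hω₂ using 1; simp only [e]; field_simp)
  rw [trace_sub_trace, show 3 * I = (3 : ℕ) * I by norm_num, Real.exp_nat_mul, mul_div_assoc,
    mul_assoc]
  refine (abs_sub _ _).trans ?_
  refine (add_le_add_left ((abs_add_le _ _).trans (add_le_add_left (abs_sub _ _) _)) _).trans ?_
  linarith

end FundamentalSystem

end Energy

section Gram

variable {V : ℝ → ℝ} {E R I : ℝ}

lemma integral_integral_sq_wedge {u v : ℝ → ℝ} (hu : Continuous u) (hv : Continuous v) (a b : ℝ) :
    ∫ s in a..b, ∫ t in a..b, (u s * v t - v s * u t) ^ 2 =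
      2 * ((∫ t in a..b, u t ^ 2) * (∫ t in a..b, v t ^ 2) - (∫ t in a..b, u t * v t) ^ 2) := by
  have hinner (s : ℝ) : ∫ t in a..b, (u s * v t - v s * u t) ^ 2 =
      u s ^ 2 * (∫ t in a..b, v t ^ 2) - 2 * (∫ t in a..b, u t * v t) * (u s * v s) +
        v s ^ 2 * ∫ t in a..b, u t ^ 2 := by
    have hexpand (t : ℝ) : (u s * v t - v s * u t) ^ 2 =
        u s ^ 2 * v t ^ 2 - 2 * (u s * v s) * (u t * v t) + v s ^ 2 * u t ^ 2 := by ring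
    simp only [hexpand]
    rw [intervalIntegral.integral_add, intervalIntegral.integral_sub,
      intervalIntegral.integral_const_mul, intervalIntegral.integral_const_mul,
      intervalIntegral.integral_const_mul]
    · ring
    all_goals exact Continuous.intervalIntegrable (by fun_prop) _ _
  simp only [hinner]
  rw [intervalIntegral.integral_add, intervalIntegral.integral_sub,
    intervalIntegral.integral_mul_const, intervalIntegral.integral_const_mul,
    intervalIntegral.integral_mul_const]
  · ring
  all_goals exact Continuous.intervalIntegrable (by fun_prop) _ _

lemma integral_abs_sub_const_le (hR : 0 ≤ R) (hE : 0 ≤ E) (hV : IntervalIntegrable V volume 0 R)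
    (hI : ∫ t in (0 : ℝ)..R, |V t| ≤ I) : ∫ t in (0 : ℝ)..R, |V t - E| ≤ I + E * R := by
  have h := intervalIntegral.integral_mono_on hR (hV.sub intervalIntegrable_const).abs
    (hV.abs.add intervalIntegrable_const) fun t _ => abs_sub (V t) E
  rw [intervalIntegral.integral_add hV.abs intervalIntegrable_const,
    intervalIntegral.integral_const, sub_zero, smul_eq_mul, abs_of_nonneg hE] at h
  linarith

section InitialData

variable {y y' : ℝ → ℝ} (hE : 1 / 4 ≤ E) (hV : IntervalIntegrable V volume 0 R)
  (hI : ∫ t in (0 : ℝ)..R, |V t| ≤ I) (hy : IsRealSolution (fun t => V t - E) y y') {s : ℝ}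
  (hs : s ∈ Icc 0 R) (hys : y s = 0) (hys' : y' s = 1)
include hE hV hI hy hs hys hys'

lemma IsRealSolution.abs_le_exp_mul_sub {t : ℝ} (ht : t ∈ Icc s R) :
    |y t| ≤ Real.exp I * (t - s) := by
  have hderiv (x : ℝ) (hx : x ∈ Ι s t) : ‖y' x‖ ≤ Real.exp I := by
    rw [uIoc_of_le ht.1] at hx
    have hle := hy.energy_le hE hV hI hs ⟨hs.1.trans hx.1.le, hx.2.trans ht.2⟩
    rw [hys, hys', one_pow, zero_pow two_ne_zero, mul_zero, add_zero, one_mul,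
      show 2 * I = (2 : ℕ) * I by norm_num, Real.exp_nat_mul] at hle
    have : 0 ≤ E * y x ^ 2 := mul_nonneg (by linarith) (sq_nonneg _)
    exact abs_le_of_sq_le_sq (by linarith) (Real.exp_pos I).le
  have h := intervalIntegral.norm_integral_le_of_norm_le_const hderiv
  rwa [(hy.isPrimitiveOn s t).integral_eq_sub, hys, sub_zero, Real.norm_eq_abs,
    abs_of_nonneg (sub_nonneg.2 ht.1)] at h

lemma IsRealSolution.half_le_deriv {t : ℝ} (ht : t ∈ Icc s R)
    (hsmall : Real.exp I * (t - s) * (I + E * R) ≤ 1 / 2) : 1 / 2 ≤ y' t := by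
  have hw : IntervalIntegrable (fun x => |V x - E|) volume 0 R :=
    (hV.sub intervalIntegrable_const).abs
  have hst : [[s, t]] ⊆ [[0, R]] := by
    rw [uIcc_of_le ht.1, uIcc_of_le (hs.1.trans hs.2)]
    exact Icc_subset_Icc hs.1 ht.2
  have habs : |y' t - y' s| ≤ 1 / 2 := calc
    |y' t - y' s| = ‖∫ x in s..t, (V x - E) * y x‖ := by
      rw [(hy.isPrimitiveOn_deriv s t).integral_eq_sub, Real.norm_eq_abs]
    _ ≤ ∫ x in s..t, Real.exp I * (t - s) * |V x - E| := by
      refine intervalIntegral.norm_integral_le_of_norm_le ht.1 (.of_forall fun x hx => ?_)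
        ((hw.mono_set hst).const_mul _)
      rw [Real.norm_eq_abs, abs_mul, mul_comm]
      gcongr
      refine (hy.abs_le_exp_mul_sub hE hV hI hs hys hys' ⟨hx.1.le, hx.2.trans ht.2⟩).trans ?_
      gcongr
      exact hx.2
    _ = Real.exp I * (t - s) * ∫ x in s..t, |V x - E| := intervalIntegral.integral_const_mul _ _
    _ ≤ Real.exp I * (t - s) * (I + E * R) := by
      refine mul_le_mul_of_nonneg_left ?_ (mul_nonneg (Real.exp_pos I).le (sub_nonneg.2 ht.1))
      exact (intervalIntegral.integral_mono_interval hs.1 ht.1 ht.2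
        (.of_forall fun _ => abs_nonneg _) hw).trans
          (integral_abs_sub_const_le (hs.1.trans hs.2) (by linarith) hV hI)
    _ ≤ 1 / 2 := hsmall
  rw [hys'] at habs
  linarith [neg_le_of_abs_le habs]

lemma IsRealSolution.pow_three_le_integral_sq {η : ℝ} (hη : 0 ≤ η) (hsη : s + η ≤ R)
    (hsmall : Real.exp I * η * (I + E * R) ≤ 1 / 2) :
    η ^ 3 / 12 ≤ ∫ t in (0 : ℝ)..R, y t ^ 2 := by
  have hR : 0 ≤ R := hs.1.trans hs.2
  have hIER : 0 ≤ I + E * R := add_nonneg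
    ((intervalIntegral.integral_nonneg hR fun _ _ => abs_nonneg _).trans hI)
    (mul_nonneg (by linarith) hR)
  have hlow (t : ℝ) (ht : t ∈ Icc s (s + η)) : (t - s) / 2 ≤ y t := by
    have hderiv (x : ℝ) (hx : x ∈ Icc s t) : 1 / 2 ≤ y' x := by
      refine hy.half_le_deriv hE hV hI hs hys hys' ⟨hx.1, by linarith [hx.2, ht.2]⟩
        (le_trans ?_ hsmall)
      gcongr
      linarith [hx.2, ht.2]
    have h := intervalIntegral.integral_mono_on ht.1 intervalIntegrable_const
      (hy.isPrimitiveOn s t).intervalIntegrable hderiv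
    rw [(hy.isPrimitiveOn s t).integral_eq_sub, intervalIntegral.integral_const, hys,
      smul_eq_mul] at h
    linarith
  have hsq : IntervalIntegrable (fun t => y t ^ 2) volume 0 R :=
    (hy.continuous.pow 2).intervalIntegrable 0 R
  calc η ^ 3 / 12 = ∫ t in s..s + η, ((t - s) / 2) ^ 2 := by
        rw [intervalIntegral.integral_comp_sub_right (fun t => (t / 2) ^ 2)]
        simp only [div_pow, intervalIntegral.integral_div, integral_pow]
        ring
    _ ≤ ∫ t in s..s + η, y t ^ 2 := by
        refine intervalIntegral.integral_mono_on (by linarith)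
          (Continuous.intervalIntegrable (by fun_prop) _ _)
          ((hy.continuous.pow 2).intervalIntegrable _ _) fun t ht => ?_
        exact pow_le_pow_left₀ (by linarith [ht.1]) (hlow t ht) 2
    _ ≤ ∫ t in (0 : ℝ)..R, y t ^ 2 :=
        intervalIntegral.integral_mono_interval hs.1 (by linarith) hsη
          (.of_forall fun _ => sq_nonneg _) hsq

end InitialData

namespace FundamentalSystem

variable {p : ℝ → ℝ}

/-- The Gram determinant of `u` and `v` in `L²(0, R)`. -/
noncomputable def gram (F : FundamentalSystem p) (R : ℝ) : ℝ :=
  (∫ t in (0 : ℝ)..R, F.u t ^ 2) * (∫ t in (0 : ℝ)..R, F.v t ^ 2) -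
    (∫ t in (0 : ℝ)..R, F.u t * F.v t) ^ 2

/-- Lagrange's identity writes twice the Gram determinant as the double integral of
`y_s(t)²`, where `y_s` is the solution vanishing at `s` with slope `1`; near `s` it grows
linearly. -/
theorem pow_three_le_gram (F : FundamentalSystem fun t => V t - E) (hR : 1 ≤ R) (hE : 1 / 4 ≤ E)
    (hV : IntervalIntegrable V volume 0 R) (hI : ∫ t in (0 : ℝ)..R, |V t| ≤ I) {η : ℝ}
    (hη : 0 ≤ η) (hη' : η ≤ 1 / 2) (hsmall : Real.exp I * η * (I + E * R) ≤ 1 / 2) :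
    η ^ 3 / 48 ≤ F.gram R := by
  have hu := F.isRealSolution_u
  have hv := F.isRealSolution_v
  have hu_cont := hu.continuous
  have hv_cont := hv.continuous
  have hpoint (s : ℝ) (hs : s ∈ Icc 0 (1 / 2)) :
      η ^ 3 / 12 ≤ ∫ t in (0 : ℝ)..R, (F.u s * F.v t - F.v s * F.u t) ^ 2 :=
    ((hv.const_mul (F.u s)).sub (hu.const_mul (F.v s))).pow_three_le_integral_sq hE hV hI
      (s := s) ⟨hs.1, by linarith [hs.2]⟩ (by ring) (by linear_combination F.wronskian_eq_one s)
      hη (by linarith [hs.2]) hsmall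
  have hcont : Continuous fun s => ∫ t in (0 : ℝ)..R, (F.u s * F.v t - F.v s * F.u t) ^ 2 :=
    intervalIntegral.continuous_parametric_intervalIntegral_of_continuous' (by fun_prop) 0 R
  have hdouble : η ^ 3 / 24 ≤
      ∫ s in (0 : ℝ)..R, ∫ t in (0 : ℝ)..R, (F.u s * F.v t - F.v s * F.u t) ^ 2 := calc
    η ^ 3 / 24 = ∫ _ in (0 : ℝ)..1 / 2, η ^ 3 / 12 := by
      rw [intervalIntegral.integral_const, smul_eq_mul]; ring
    _ ≤ ∫ s in (0 : ℝ)..1 / 2, ∫ t in (0 : ℝ)..R, (F.u s * F.v t - F.v s * F.u t) ^ 2 :=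
      intervalIntegral.integral_mono_on (by norm_num) intervalIntegrable_const
        (hcont.intervalIntegrable _ _) hpoint
    _ ≤ _ := intervalIntegral.integral_mono_interval le_rfl (by norm_num) (by linarith)
        (.of_forall fun s => intervalIntegral.integral_nonneg (by linarith) fun t _ =>
          sq_nonneg _) (hcont.intervalIntegrable _ _)
  rw [integral_integral_sq_wedge hu_cont hv_cont, ← gram] at hdouble
  linarith

end FundamentalSystem

end Gram

section SpectralParameter

lemma four_mul_det_mul_det_le_sq {a b c α β γ : ℝ} (hdet : 0 < a * c - b ^ 2) :
    4 * (α * γ - β ^ 2) * (a * c - b ^ 2) ≤ (α * a + 2 * β * b + γ * c) ^ 2 := by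
  have ha : a ≠ 0 := by rintro rfl; nlinarith [sq_nonneg b]
  refine le_of_mul_le_mul_left ?_ (pow_pos (abs_pos.2 ha) 2)
  rw [sq_abs, ← sub_nonneg]
  have hsq : a ^ 2 * (α * a + 2 * β * b + γ * c) ^ 2 -
      a ^ 2 * (4 * (α * γ - β ^ 2) * (a * c - b ^ 2)) =
      (α * a ^ 2 + 2 * β * b * a + γ * b ^ 2 - γ * (a * c - b ^ 2)) ^ 2 +
        4 * (β * a + γ * b) ^ 2 * (a * c - b ^ 2) := by ring
  rw [hsq]
  positivity

lemma eq_zero_of_pairing_eq_zero {a b c α β γ : ℝ} (hdet : 0 < a * c - b ^ 2)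
    (hpair : α * a + 2 * β * b + γ * c = 0) (hdeg : α * γ = β ^ 2) : α = 0 ∧ β = 0 ∧ γ = 0 := by
  have ha : a ≠ 0 := by rintro rfl; nlinarith [sq_nonneg b]
  have hc : c ≠ 0 := by rintro rfl; nlinarith [sq_nonneg b]
  have hsum : (α * a + β * b) ^ 2 + β ^ 2 * (a * c - b ^ 2) = 0 := by
    linear_combination α * a * hpair - a * c * hdeg
  have hβ : β = 0 := by
    have : β ^ 2 * (a * c - b ^ 2) ≤ 0 := by linarith [sq_nonneg (α * a + β * b)]
    exact pow_eq_zero_iff two_ne_zero |>.1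
      (le_antisymm (nonpos_of_mul_nonpos_left this hdet) (sq_nonneg β))
  subst hβ
  have hα : α = 0 := by simpa [ha] using hsum
  subst hα
  exact ⟨rfl, rfl, by simpa [hc] using hpair⟩

namespace FundamentalSystem

section Algebra

variable {p q : ℝ → ℝ} (F : FundamentalSystem p) (G : FundamentalSystem q) {R : ℝ}

/-- The derivative of `trace R` with respect to the spectral parameter; see `hasDerivAt_trace`. -/
noncomputable def traceDeriv (R : ℝ) : ℝ :=
  -F.v R * (∫ t in (0 : ℝ)..R, F.u t ^ 2) +
    (F.u R - F.v' R) * (∫ t in (0 : ℝ)..R, F.u t * F.v t) +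
      F.u' R * ∫ t in (0 : ℝ)..R, F.v t ^ 2

lemma gram_mul_le_traceDeriv_sq (hgram : 0 < F.gram R) :
    F.gram R * (4 - F.trace R ^ 2) ≤ F.traceDeriv R ^ 2 := by
  have h := four_mul_det_mul_det_le_sq (α := -F.v R) (β := (F.u R - F.v' R) / 2) (γ := F.u' R) hgram
  rw [← gram] at h
  rw [traceDeriv, trace]
  linear_combination h - 4 * F.gram R * F.wronskian_eq_one R

/-- At a closed gap the transfer matrix is `±1`. -/
lemma transfer_eq_of_traceDeriv_eq_zero (hgram : 0 < F.gram R) (htrace : |F.trace R| = 2)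
    (hderiv : F.traceDeriv R = 0) :
    F.v R = 0 ∧ F.u' R = 0 ∧ F.u R = F.v' R ∧ |F.u R| = 1 := by
  have hsq : F.trace R ^ 2 = 4 := by rw [← sq_abs, htrace]; norm_num
  rw [trace] at hsq htrace
  obtain ⟨hv, huv, hu'⟩ := eq_zero_of_pairing_eq_zero (α := -F.v R)
    (β := (F.u R - F.v' R) / 2) (γ := F.u' R) hgram
    (by rw [traceDeriv] at hderiv; linear_combination hderiv)
    (by linear_combination F.wronskian_eq_one R - hsq / 4)
  have huv' : F.u R = F.v' R := by linarith
  refine ⟨neg_eq_zero.1 hv, hu', huv', ?_⟩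
  rw [← huv', ← two_mul, abs_mul, abs_two] at htrace
  linarith

lemma trace_eq_of_transfer_eq (hv : F.v R = 0) (hu' : F.u' R = 0) (huv : F.u R = F.v' R) :
    G.trace R = F.u R * (2 -
      ((∫ s in (0 : ℝ)..R, (q s - p s) * (F.u s * G.u s)) *
          (∫ s in (0 : ℝ)..R, (q s - p s) * (F.v s * G.v s)) -
        (∫ s in (0 : ℝ)..R, (q s - p s) * (F.v s * G.u s)) *
          ∫ s in (0 : ℝ)..R, (q s - p s) * (F.u s * G.v s))) := by
  have h₁ := F.variation_of_constants G.isRealSolution_u R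
  have h₂ := F.variation_of_constants_deriv G.isRealSolution_u R
  have h₃ := F.variation_of_constants G.isRealSolution_v R
  have h₄ := F.variation_of_constants_deriv G.isRealSolution_v R
  rw [G.u_zero, G.u'_zero, hv] at h₁
  rw [G.u_zero, G.u'_zero, hu', ← huv] at h₂
  rw [G.v_zero, G.v'_zero, hv] at h₃
  rw [G.v_zero, G.v'_zero, hu', ← huv] at h₄
  have hF := F.wronskian_eq_one R
  have hG := G.wronskian_eq_one R
  rw [hv, ← huv] at hF
  rw [h₁, h₂, h₃, h₄] at hG
  rw [trace, h₁, h₄]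
  linear_combination F.u R * hG - F.u R *
    ((1 - ∫ s in (0 : ℝ)..R, (q s - p s) * (F.v s * G.u s)) *
        (1 + ∫ s in (0 : ℝ)..R, (q s - p s) * (F.u s * G.v s)) +
      (∫ s in (0 : ℝ)..R, (q s - p s) * (F.u s * G.u s)) *
        ∫ s in (0 : ℝ)..R, (q s - p s) * (F.v s * G.v s)) * hF

end Algebra

section Family

variable {V : ℝ → ℝ} {R E₀ : ℝ}

lemma continuousAt_isRealSolution {y y' : ℝ → ℝ → ℝ}
    (hy : ∀ E, IsRealSolution (fun t => V t - E) (y E) (y' E)) (hy0 : ∀ E, y E 0 = y E₀ 0)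
    (hy'0 : ∀ E, y' E 0 = y' E₀ 0) {B t : ℝ} (F : FundamentalSystem fun t => V t - E₀)
    (hB : ∀ᶠ E in 𝓝 E₀, ∀ s ∈ Icc 0 t, |y E s| ≤ B) (ht : 0 ≤ t) :
    ContinuousAt (fun E => y E t) E₀ := by
  have hInt {f : ℝ → ℝ} (hf : Continuous f) : ∀ᶠ E in 𝓝 E₀,
      ‖∫ s in (0 : ℝ)..t, f s * y E s‖ ≤ ∫ s in (0 : ℝ)..t, |f s| * B := by
    filter_upwards [hB] with E hE
    refine intervalIntegral.norm_integral_le_of_norm_le ht (.of_forall fun s hs => ?_)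
      (Continuous.intervalIntegrable (by fun_prop) _ _)
    rw [norm_mul]
    exact mul_le_mul_of_nonneg_left (hE s (Ioc_subset_Icc_self hs)) (norm_nonneg _)
  have hlim {f : ℝ → ℝ} (hf : Continuous f) :
      Tendsto (fun E => (E₀ - E) * ∫ s in (0 : ℝ)..t, f s * y E s) (𝓝 E₀) (𝓝 0) := by
    refine Tendsto.zero_mul_isBoundedUnder_le ?_ (isBoundedUnder_of_eventually_le (hInt hf))
    simpa using (continuous_const.sub continuous_id).tendsto (f := fun E => E₀ - E) E₀
  have hvar (E : ℝ) : y E t = y E₀ t +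
      (F.v t * ((E₀ - E) * ∫ s in (0 : ℝ)..t, F.u s * y E s) -
        F.u t * ((E₀ - E) * ∫ s in (0 : ℝ)..t, F.v s * y E s)) := by
    have h := F.variation_of_constants (hy E) t
    simp only [sub_sub_sub_cancel_left, intervalIntegral.integral_const_mul] at h
    rw [hy0, hy'0] at h
    linear_combination h - F.eq_combination (hy E₀) t
  have hdiff := ((hlim F.isRealSolution_u.continuous).const_mul (F.v t)).sub
    ((hlim F.isRealSolution_v.continuous).const_mul (F.u t))
  have htend := hdiff.const_add (y E₀ t)
  simp only [mul_zero, sub_zero, add_zero, ← hvar] at htend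
  exact htend

lemma continuousAt_integral_mul_isRealSolution {y y' : ℝ → ℝ → ℝ}
    (hy : ∀ E, IsRealSolution (fun t => V t - E) (y E) (y' E)) (hy0 : ∀ E, y E 0 = y E₀ 0)
    (hy'0 : ∀ E, y' E 0 = y' E₀ 0) {B : ℝ} (F : FundamentalSystem fun t => V t - E₀)
    (hB : ∀ᶠ E in 𝓝 E₀, ∀ s ∈ Icc 0 R, |y E s| ≤ B) (hR : 0 ≤ R) {f : ℝ → ℝ} (hf : Continuous f) :
    ContinuousAt (fun E => ∫ s in (0 : ℝ)..R, f s * y E s) E₀ := by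
  refine intervalIntegral.continuousAt_of_dominated_interval (bound := fun s => |f s| * B)
    (.of_forall fun E => (hf.mul (hy E).continuous).aestronglyMeasurable) ?_
    (Continuous.intervalIntegrable (by fun_prop) _ _) ?_
  · filter_upwards [hB] with E hE
    refine .of_forall fun s hs => ?_
    rw [uIoc_of_le hR] at hs
    rw [norm_mul]
    exact mul_le_mul_of_nonneg_left (hE s (Ioc_subset_Icc_self hs)) (norm_nonneg _)
  · refine .of_forall fun s hs => continuousAt_const.mul ?_
    rw [uIoc_of_le hR] at hs
    refine continuousAt_isRealSolution hy hy0 hy'0 (B := B) F ?_ hs.1.le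
    filter_upwards [hB] with E hE r hr
    exact hE r ⟨hr.1, hr.2.trans hs.2⟩

variable (F : ∀ E : ℝ, FundamentalSystem fun t => V t - E) (hR : 0 ≤ R)
  (hV : IntervalIntegrable V volume 0 R) (hE₀ : 1 / 4 < E₀)
include hR hV hE₀

lemma continuousAt_integral_mul_u {f : ℝ → ℝ} (hf : Continuous f) :
    ContinuousAt (fun E => ∫ s in (0 : ℝ)..R, f s * (F E).u s) E₀ := by
  refine continuousAt_integral_mul_isRealSolution (fun E => (F E).isRealSolution_u)
    (fun E => by rw [(F E).u_zero, (F E₀).u_zero]) (fun E => by rw [(F E).u'_zero, (F E₀).u'_zero])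
    (B := Real.exp (∫ t in (0 : ℝ)..R, |V t|)) (F E₀) ?_ hR hf
  filter_upwards [eventually_ge_nhds hE₀] with E hE s hs
  exact (F E).abs_u_le hE hV le_rfl hs

lemma continuousAt_integral_mul_v {f : ℝ → ℝ} (hf : Continuous f) :
    ContinuousAt (fun E => ∫ s in (0 : ℝ)..R, f s * (F E).v s) E₀ := by
  refine continuousAt_integral_mul_isRealSolution (fun E => (F E).isRealSolution_v)
    (fun E => by rw [(F E).v_zero, (F E₀).v_zero]) (fun E => by rw [(F E).v'_zero, (F E₀).v'_zero])
    (B := Real.exp (∫ t in (0 : ℝ)..R, |V t|) / √(1 / 4)) (F E₀) ?_ hR hf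
  filter_upwards [eventually_ge_nhds hE₀] with E hE s hs
  refine ((F E).abs_v_le hE hV le_rfl hs).trans ?_
  exact div_le_div_of_nonneg_left (Real.exp_pos _).le (by norm_num) (Real.sqrt_le_sqrt hE)

theorem hasDerivAt_trace :
    HasDerivAt (fun E => (F E).trace R) ((F E₀).traceDeriv R) E₀ := by
  have hu := (F E₀).isRealSolution_u.continuous
  have hv := (F E₀).isRealSolution_v.continuous
  have huu := continuousAt_integral_mul_u F hR hV hE₀ hu
  have hvu := continuousAt_integral_mul_u F hR hV hE₀ hv
  have huv := continuousAt_integral_mul_v F hR hV hE₀ hu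
  have hvv := continuousAt_integral_mul_v F hR hV hE₀ hv
  have hslope {E : ℝ} (hE : E ≠ E₀) : slope (fun E => (F E).trace R) E₀ E =
      -((F E₀).v R * ∫ s in (0 : ℝ)..R, (F E₀).u s * (F E).u s) +
        (F E₀).u R * (∫ s in (0 : ℝ)..R, (F E₀).v s * (F E).u s) -
        (F E₀).v' R * (∫ s in (0 : ℝ)..R, (F E₀).u s * (F E).v s) +
        (F E₀).u' R * ∫ s in (0 : ℝ)..R, (F E₀).v s * (F E).v s := by
    rw [slope_def_field, trace_sub_trace (F E₀) (F E), div_eq_iff (sub_ne_zero.2 hE)]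
    simp only [sub_sub_sub_cancel_left, intervalIntegral.integral_const_mul]
    ring
  have hlim := ((hvu.const_mul ((F E₀).u R)).add ((huu.const_mul ((F E₀).v R)).neg)).add
    ((hvv.const_mul ((F E₀).u' R)).sub (huv.const_mul ((F E₀).v' R)))
  rw [hasDerivAt_iff_tendsto_slope]
  convert (hlim.tendsto.mono_left nhdsWithin_le_nhds).congr' ?_ using 2
  · simp only [Pi.add_apply, Pi.sub_apply, Pi.neg_apply, traceDeriv, sq,
      mul_comm ((F E₀).v _) ((F E₀).u _)]
    ring
  · filter_upwards [self_mem_nhdsWithin] with E hE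
    rw [hslope hE]
    simp only [Pi.add_apply, Pi.sub_apply, Pi.neg_apply]
    ring

theorem eventually_abs_trace_lt_two (hgram : 0 < (F E₀).gram R) (htrace : |(F E₀).trace R| = 2)
    (hderiv : (F E₀).traceDeriv R = 0) : ∀ᶠ E in 𝓝[≠] E₀, |(F E).trace R| < 2 := by
  obtain ⟨hvR, hu'R, huvR, huR⟩ := (F E₀).transfer_eq_of_traceDeriv_eq_zero hgram htrace hderiv
  have hu := (F E₀).isRealSolution_u.continuous
  have hv := (F E₀).isRealSolution_v.continuous
  set K : ℝ → ℝ := fun E =>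
    (∫ s in (0 : ℝ)..R, (F E₀).u s * (F E).u s) * (∫ s in (0 : ℝ)..R, (F E₀).v s * (F E).v s) -
      (∫ s in (0 : ℝ)..R, (F E₀).v s * (F E).u s) * ∫ s in (0 : ℝ)..R, (F E₀).u s * (F E).v s
    with hK
  have hcont : ContinuousAt K E₀ :=
    ((continuousAt_integral_mul_u F hR hV hE₀ hu).mul
      (continuousAt_integral_mul_v F hR hV hE₀ hv)).sub
    ((continuousAt_integral_mul_u F hR hV hE₀ hv).mul
      (continuousAt_integral_mul_v F hR hV hE₀ hu))
  have hK0 : K E₀ = (F E₀).gram R := by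
    simp only [hK, gram, sq, mul_comm ((F E₀).v _) ((F E₀).u _)]
  have hpos : ∀ᶠ E in 𝓝 E₀, 0 < K E :=
    hcont.eventually (by simpa only [hK0] using lt_mem_nhds hgram)
  have hsmall : ∀ᶠ E in 𝓝 E₀, (E₀ - E) ^ 2 * K E < 4 := by
    refine ContinuousAt.eventually_lt (f := fun E => (E₀ - E) ^ 2 * K E)
      (((continuousAt_const.sub continuousAt_id).pow 2).mul hcont) continuousAt_const (by simp)
  filter_upwards [nhdsWithin_le_nhds hpos, nhdsWithin_le_nhds hsmall, self_mem_nhdsWithin]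
    with E hKE hKE' hE
  have hprod : 0 < (E₀ - E) ^ 2 * K E :=
    mul_pos (sq_pos_of_ne_zero (sub_ne_zero.2 (Ne.symm hE))) hKE
  have htr := (F E₀).trace_eq_of_transfer_eq (F E) hvR hu'R huvR
  simp only [sub_sub_sub_cancel_left, intervalIntegral.integral_const_mul] at htr
  rw [htr, abs_mul, huR, one_mul, abs_lt]
  constructor <;> linarith

end Family

end FundamentalSystem

end SpectralParameter

section Bands

/-- The properties of a discriminant `D` with derivative `D'` that make the bands `{|D| ≤ 2}` fat:
`D` is `L`-Lipschitz, it crosses `(-2, 2)` with a speed controlled from below by `g`, and at a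
closed gap, where the crossing speed vanishes, both sides of the edge belong to bands. -/
structure BandRegularOn (D D' : ℝ → ℝ) (L g : ℝ) (s : Set ℝ) : Prop where
  hasDerivAt : ∀ E ∈ s, HasDerivAt D (D' E) E
  abs_sub_le : ∀ E₁ ∈ s, ∀ E₂ ∈ s, |D E₂ - D E₁| ≤ L * |E₂ - E₁|
  mul_le_sq : ∀ E ∈ s, |D E| < 2 → g * (4 - D E ^ 2) ≤ D' E ^ 2
  eventually_abs_lt_two : ∀ E ∈ s, |D E| = 2 → D' E = 0 → ∀ᶠ E' in 𝓝[≠] E, |D E'| < 2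

namespace BandRegularOn

variable {D D' : ℝ → ℝ} {L g ε η w a y E₁ E₂ E₃ : ℝ} {s J : Set ℝ} (h : BandRegularOn D D' L g s)
include h

lemma neg : BandRegularOn (fun E => -D E) (fun E => -D' E) L g s where
  hasDerivAt E hE := (h.hasDerivAt E hE).neg
  abs_sub_le E₁ hE₁ E₂ hE₂ := by
    rw [← neg_sub', abs_neg]
    exact h.abs_sub_le E₁ hE₁ E₂ hE₂
  mul_le_sq E hE := by simpa only [abs_neg, neg_sq] using h.mul_le_sq E hE
  eventually_abs_lt_two E hE := by
    simpa only [abs_neg, neg_eq_zero] using h.eventually_abs_lt_two E hE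

lemma continuousOn : ContinuousOn D s :=
  fun E hE => (h.hasDerivAt E hE).continuousAt.continuousWithinAt

lemma frequently_abs_lt_two {E : ℝ} (hE : E ∈ s) (hD : |D E| ≤ 2) : ∃ᶠ E' in 𝓝 E, |D E'| < 2 := by
  wlog hpos : 0 ≤ D E generalizing D D'
  · simpa only [abs_neg] using this h.neg (by rwa [abs_neg]) (by linarith)
  rcases hD.lt_or_eq with hlt | heq
  · exact fun hn => hn.self_of_nhds hlt
  by_cases hD' : D' E = 0
  · exact (h.eventually_abs_lt_two E hE heq hD').frequently.filter_mono nhdsWithin_le_nhds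
  · refine fun hn => hD' (IsLocalMin.hasDerivAt_eq_zero ?_ (h.hasDerivAt E hE))
    rw [abs_of_nonneg hpos] at heq
    filter_upwards [hn, (h.hasDerivAt E hE).continuousAt.eventually (lt_mem_nhds (b := D E) (a := 0)
      (by linarith))] with E' hE' hpos'
    rw [abs_of_pos hpos', not_lt] at hE'
    linarith

lemma measure_abs_eq_two : volume {E ∈ s | |D E| = 2} = 0 := by
  refine measure_null_of_locally_null _ fun E hE => ⟨{E}, ?_, measure_singleton E⟩
  have hiso : ∀ᶠ E' in 𝓝[≠] E, |D E'| ≠ 2 := by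
    by_cases hD' : D' E = 0
    · exact (h.eventually_abs_lt_two E hE.1 hE.2 hD').mono fun _ => ne_of_lt
    · filter_upwards [(h.hasDerivAt E hE.1).eventually_ne hD' (c := 2),
        (h.hasDerivAt E hE.1).eventually_ne hD' (c := -2)] with E' h₁ h₂ h₃
      exact (eq_or_eq_neg_of_abs_eq h₃).elim h₁ h₂
  rw [eventually_nhdsWithin_iff] at hiso
  rw [← eventually_mem_set, eventually_nhdsWithin_iff]
  filter_upwards [hiso] with E' hE' hmem
  exact not_imp_not.1 hE' hmem.2

section CrossingSpeed

variable (hg : 0 < g)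
include hg

lemma min_lt_of_mem_Ioo (hs : Icc E₁ E₃ ⊆ s) (hD : ∀ E ∈ Icc E₁ E₃, -2 < D E)
    (hE₂ : E₂ ∈ Ioo E₁ E₃) (hlt : D E₂ < 2) : min (D E₁) (D E₃) < D E₂ := by
  by_contra! hmin
  obtain ⟨h₁, h₃⟩ := le_min_iff.1 hmin
  obtain ⟨m, hm, hDm⟩ := isCompact_Icc.exists_isMinOn ⟨E₂, Ioo_subset_Icc_self hE₂⟩
    (h.continuousOn.mono hs)
  obtain ⟨m', hm', hDm'⟩ : ∃ m' ∈ Ioo E₁ E₃, ∀ E ∈ Icc E₁ E₃, D m' ≤ D E := by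
    rcases (isMinOn_iff.1 hDm E₂ (Ioo_subset_Icc_self hE₂)).lt_or_eq with hlt' | heq
    · refine ⟨m, ⟨lt_of_le_of_ne hm.1 ?_, lt_of_le_of_ne hm.2 ?_⟩, isMinOn_iff.1 hDm⟩ <;>
        rintro rfl <;> linarith
    · exact ⟨E₂, hE₂, by simpa only [heq] using isMinOn_iff.1 hDm⟩
  have hms := Ioo_subset_Icc_self hm'
  have hD'm : D' m' = 0 := IsLocalMin.hasDerivAt_eq_zero
    ((isMinOn_iff.2 hDm').isLocalMin (Icc_mem_nhds hm'.1 hm'.2)) (h.hasDerivAt m' (hs hms))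
  have hlow := hD m' hms
  have hup : D m' < 2 := (hDm' E₂ (Ioo_subset_Icc_self hE₂)).trans_lt hlt
  have hspeed := h.mul_le_sq m' (hs hms) (abs_lt.2 ⟨hlow, hup⟩)
  rw [hD'm] at hspeed
  nlinarith [mul_pos hg (mul_pos (sub_pos.2 hup) (sub_pos.2 hlow))]

theorem ofReal_le_volume_abs_le_two (hs : Ioo (y - η) (y + η) ⊆ s) (hL : L * η ≤ 1) (hη : 0 < η)
    (hL₀ : 0 ≤ L) (hy : |D y| ≤ 2) :
    ENNReal.ofReal η ≤ volume (Ioo (y - η) (y + η) ∩ {E | |D E| ≤ 2}) := by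
  wlog hpos : 0 ≤ D y generalizing D D'
  · simpa only [abs_neg] using this h.neg (by rwa [abs_neg]) (by linarith)
  have hys : y ∈ Ioo (y - η) (y + η) := ⟨by linarith, by linarith⟩
  have hlow : ∀ E ∈ Ioo (y - η) (y + η), -2 < D E := fun E hE => by
    have hE' : |E - y| ≤ η := (abs_lt.2 ⟨by linarith [hE.1], by linarith [hE.2]⟩).le
    linarith [neg_abs_le (D E - D y), h.abs_sub_le y (hs hys) E (hs hE),
      mul_le_mul_of_nonneg_left hE' hL₀]
  have hside : (∀ E ∈ Ioo (y - η) y, D E ≤ 2) ∨ ∀ E ∈ Ioo y (y + η), D E ≤ 2 := by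
    by_contra! hcon
    obtain ⟨⟨E₁, hE₁, hD₁⟩, E₃, hE₃, hD₃⟩ := hcon
    obtain ⟨E, hDE, hE⟩ := ((h.frequently_abs_lt_two (hs hys) hy).and_eventually
      (Ioo_mem_nhds hE₁.2 hE₃.1)).exists
    have hsub : Icc E₁ E₃ ⊆ Ioo (y - η) (y + η) := Icc_subset_Ioo hE₁.1 hE₃.2
    have hmin := h.min_lt_of_mem_Ioo hg (hsub.trans hs) (fun E hE => hlow E (hsub hE)) hE
      (abs_lt.1 hDE).2
    linarith [(abs_lt.1 hDE).2, lt_min hD₁ hD₃]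
  rcases hside with hleft | hright
  · calc ENNReal.ofReal η = volume (Ioo (y - η) y) := by rw [Real.volume_Ioo, sub_sub_cancel]
      _ ≤ _ := by
        refine measure_mono fun E hE => ?_
        have hE' : E ∈ Ioo (y - η) (y + η) := ⟨hE.1, hE.2.trans hys.2⟩
        exact ⟨hE', abs_le.2 ⟨(hlow E hE').le, hleft E hE⟩⟩
  · calc ENNReal.ofReal η = volume (Ioo y (y + η)) := by rw [Real.volume_Ioo, add_sub_cancel_left]
      _ ≤ _ := by
        refine measure_mono fun E hE => ?_
        have hE' : E ∈ Ioo (y - η) (y + η) := ⟨hys.1.trans hE.1, hE.2⟩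
        exact ⟨hE', abs_le.2 ⟨(hlow E hE').le, hright E hE⟩⟩

/-- The mean value theorem for `√(2 - D)`, whose derivative is at least `√(g / 2)` in absolute
value. -/
lemma sub_le_sqrt (hs : Icc E₁ E₂ ⊆ s) (hD : ∀ E ∈ Icc E₁ E₂, 0 ≤ D E ∧ D E < 2) (hE : E₁ ≤ E₂)
    (h₁ : 2 - ε ≤ D E₁) (h₂ : 2 - ε ≤ D E₂) : E₂ - E₁ ≤ √(2 * ε / g) := by
  rcases hE.eq_or_lt with rfl | hlt
  · rw [sub_self]
    exact Real.sqrt_nonneg _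
  have hpos {E : ℝ} (hE : E ∈ Icc E₁ E₂) : 0 < 2 - D E := sub_pos.2 (hD E hE).2
  have hderiv {E : ℝ} (hE : E ∈ Icc E₁ E₂) :
      HasDerivAt (fun E => √(2 - D E)) (-D' E / (2 * √(2 - D E))) E :=
    ((h.hasDerivAt E (hs hE)).const_sub 2).sqrt (hpos hE).ne'
  obtain ⟨ξ, hξ, hslope⟩ := exists_hasDerivAt_eq_slope (fun E => √(2 - D E))
    (fun E => -D' E / (2 * √(2 - D E))) hlt
    (fun E hE => (hderiv hE).continuousAt.continuousWithinAt)
    fun E hE => hderiv (Ioo_subset_Icc_self hE)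
  have hξ' := Ioo_subset_Icc_self hξ
  have hspeed : g / 2 ≤ (-D' ξ / (2 * √(2 - D ξ))) ^ 2 := by
    have hD2 : |D ξ| < 2 := abs_lt.2 ⟨by linarith [(hD ξ hξ').1], (hD ξ hξ').2⟩
    rw [div_pow, mul_pow, Real.sq_sqrt (hpos hξ').le, neg_sq,
      le_div_iff₀ (by linarith [hpos hξ'])]
    nlinarith [h.mul_le_sq ξ (hs hξ') hD2, mul_nonneg (mul_nonneg hg.le (hpos hξ').le) (hD ξ hξ').1]
  have hsq : (√(2 - D E₂) - √(2 - D E₁)) ^ 2 ≤ ε := by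
    have hroot {E : ℝ} (hE : 2 - ε ≤ D E) : √(2 - D E) ≤ √ε := Real.sqrt_le_sqrt (by linarith)
    calc (√(2 - D E₂) - √(2 - D E₁)) ^ 2 ≤ √ε ^ 2 :=
          sq_le_sq.2 ((abs_sub_le_of_nonneg_of_le (Real.sqrt_nonneg _) (hroot h₂)
            (Real.sqrt_nonneg _) (hroot h₁)).trans (le_abs_self _))
      _ = ε := Real.sq_sqrt (by linarith [hpos (left_mem_Icc.2 hE)])
  rw [hslope, div_pow, le_div_iff₀ (pow_pos (sub_pos.2 hlt) 2)] at hspeed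
  refine Real.le_sqrt_of_sq_le ?_
  rw [le_div_iff₀ hg]
  linarith

lemma volume_le_of_forall_lt_two [J.OrdConnected] (hJ : J ⊆ s) (hD : ∀ E ∈ J, 0 ≤ D E) {A : Set ℝ}
    (hA : A ⊆ {E ∈ J | 2 - ε ≤ D E})
    (hlt : ∀ E₁ ∈ A, ∀ E₂ ∈ A, ∀ E ∈ Icc E₁ E₂, D E < 2) :
    volume A ≤ ENNReal.ofReal √(2 * ε / g) := by
  refine (Real.volume_le_diam A).trans (Metric.ediam_le fun E₁ hE₁ E₂ hE₂ => ?_)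
  wlog hle : E₁ ≤ E₂ generalizing E₁ E₂
  · rw [edist_comm]
    exact this E₂ hE₂ E₁ hE₁ (not_le.1 hle).le
  have hsub : Icc E₁ E₂ ⊆ J := Set.OrdConnected.out ‹_› (hA hE₁).1 (hA hE₂).1
  rw [edist_comm, edist_dist, Real.dist_eq, abs_of_nonneg (sub_nonneg.2 hle)]
  exact ENNReal.ofReal_le_ofReal (h.sub_le_sqrt hg (hsub.trans hJ)
    (fun E hE => ⟨hD E (hsub hE), hlt E₁ hE₁ E₂ hE₂ E hE⟩) hle (hA hE₁).2 (hA hE₂).2)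

lemma volume_near_upper_edge_le [J.OrdConnected] (hJ : J ⊆ s) (hD : ∀ E ∈ J, 0 ≤ D E) :
    volume {E ∈ J | 2 - ε ≤ D E ∧ D E ≤ 2} ≤ ENNReal.ofReal (2 * √(2 * ε / g)) := by
  have hcover : {E ∈ J | 2 - ε ≤ D E ∧ D E ≤ 2} ⊆ {E ∈ s | |D E| = 2} ∪
      ({E ∈ J | 2 - ε ≤ D E ∧ ∀ E' ∈ J, E' ≤ E → D E' < 2} ∪
        {E ∈ J | 2 - ε ≤ D E ∧ ∀ E' ∈ J, E ≤ E' → D E' < 2}) := by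
    rintro E ⟨hEJ, hlow, hup⟩
    rcases hup.eq_or_lt with heq | hlt
    · exact .inl ⟨hJ hEJ, by rw [heq, abs_two]⟩
    refine .inr ?_
    by_contra! hcon
    simp only [mem_union, mem_ofPred_eq, hEJ, hlow, true_and, not_or, not_forall, not_lt] at hcon
    obtain ⟨⟨E₁, hE₁, hle₁, hD₁⟩, E₃, hE₃, hle₃, hD₃⟩ := hcon
    have hsub : Icc E₁ E₃ ⊆ J := Set.OrdConnected.out ‹_› hE₁ hE₃
    have hmin := h.min_lt_of_mem_Ioo hg (hsub.trans hJ)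
      (fun E' hE' => by linarith [hD E' (hsub hE')])
      (E₂ := E) ⟨lt_of_le_of_ne hle₁ (by rintro rfl; linarith),
        lt_of_le_of_ne hle₃ (by rintro rfl; linarith)⟩ hlt
    linarith [le_min hD₁ hD₃]
  refine (measure_mono hcover).trans ((measure_union_le _ _).trans ?_)
  rw [h.measure_abs_eq_two, zero_add, two_mul,
    ENNReal.ofReal_add (Real.sqrt_nonneg _) (Real.sqrt_nonneg _)]
  refine (measure_union_le _ _).trans (add_le_add
    (h.volume_le_of_forall_lt_two hg hJ hD (fun E hE => ⟨hE.1, hE.2.1⟩) ?_)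
    (h.volume_le_of_forall_lt_two hg hJ hD (fun E hE => ⟨hE.1, hE.2.1⟩) ?_))
  · exact fun E₁ hE₁ E₂ hE₂ E hE => hE₂.2.2 E (Set.OrdConnected.out ‹_› hE₁.1 hE₂.1 hE) hE.2
  · exact fun E₁ hE₁ E₂ hE₂ E hE => hE₁.2.2 E (Set.OrdConnected.out ‹_› hE₁.1 hE₂.1 hE) hE.1

lemma volume_near_edge_le [J.OrdConnected] (hJ : J ⊆ s) (hε : ε ≤ 1)
    (hdiam : ∀ E ∈ J, ∀ E' ∈ J, L * |E' - E| ≤ 1) :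
    volume {E ∈ J | 2 - ε ≤ |D E| ∧ |D E| ≤ 2} ≤ ENNReal.ofReal (2 * √(2 * ε / g)) := by
  rcases {E ∈ J | 2 - ε ≤ |D E| ∧ |D E| ≤ 2}.eq_empty_or_nonempty with hempty | ⟨E₀, hE₀, hlow, -⟩
  · rw [hempty, measure_empty]
    exact zero_le
  wlog hpos : 0 ≤ D E₀ generalizing D D'
  · simpa only [abs_neg] using this h.neg (by rwa [abs_neg]) (by linarith)
  rw [abs_of_nonneg hpos] at hlow
  have hD : ∀ E ∈ J, 0 ≤ D E := fun E hE => by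
    linarith [neg_abs_le (D E - D E₀), h.abs_sub_le E₀ (hJ hE₀) E (hJ hE), hdiam E₀ hE₀ E hE]
  refine (measure_mono ?_).trans (h.volume_near_upper_edge_le hg hJ hD)
  rintro E ⟨hE, hE'⟩
  exact ⟨hE, by rwa [abs_of_nonneg (hD E hE)] at hE'⟩

theorem volume_near_edge_Ioc_le (hε : ε ≤ 1) (hL₀ : 0 ≤ L) (hw₀ : 0 ≤ w) (hw : L * w ≤ 1) (M : ℕ)
    (hs : Ioc a (a + M * w) ⊆ s) :
    volume {E ∈ Ioc a (a + M * w) | 2 - ε ≤ |D E| ∧ |D E| ≤ 2} ≤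
      ENNReal.ofReal (M * (2 * √(2 * ε / g))) := by
  induction M with
  | zero => simp
  | succ M ih =>
    push_cast at hs ⊢
    have hMw : a + M * w ≤ a + (M + 1) * w := by linarith
    have hcover : {E ∈ Ioc a (a + (M + 1) * w) | 2 - ε ≤ |D E| ∧ |D E| ≤ 2} ⊆
        {E ∈ Ioc a (a + M * w) | 2 - ε ≤ |D E| ∧ |D E| ≤ 2} ∪
          {E ∈ Ioc (a + M * w) (a + (M + 1) * w) | 2 - ε ≤ |D E| ∧ |D E| ≤ 2} := by
      rintro E ⟨hE, hE'⟩
      rcases le_or_gt E (a + M * w) with hle | hgt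
      · exact .inl ⟨⟨hE.1, hle⟩, hE'⟩
      · exact .inr ⟨⟨hgt, hE.2⟩, hE'⟩
    have hdiam : ∀ E ∈ Ioc (a + M * w) (a + (M + 1) * w),
        ∀ E' ∈ Ioc (a + M * w) (a + (M + 1) * w), L * |E' - E| ≤ 1 := fun E hE E' hE' =>
      (mul_le_mul_of_nonneg_left (abs_le.2 ⟨by linarith [hE.2, hE'.1], by linarith [hE.1, hE'.2]⟩)
        hL₀).trans hw
    refine (measure_mono hcover).trans ((measure_union_le _ _).trans ?_)
    rw [add_one_mul (M : ℝ) (2 * √(2 * ε / g)), ENNReal.ofReal_add (by positivity) (by positivity)]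
    exact add_le_add (ih ((Ioc_subset_Ioc_right hMw).trans hs))
      (h.volume_near_edge_le hg
        ((Ioc_subset_Ioc_left (by nlinarith [M.cast_nonneg (α := ℝ)])).trans hs) hε hdiam)

theorem exists_abs_lt_two_sub (hs : Ioo (y - η) (y + η) ⊆ s) (hL : L * (2 * η) ≤ 1) (hL₀ : 0 ≤ L)
    (hε : ε ≤ 1) (hη : 2 * √(2 * ε / g) < η) (hy : |D y| ≤ 2) :
    ∃ y' ∈ Ioo (y - η) (y + η), |D y'| < 2 - ε := by
  by_contra! hcon
  have hη₀ : 0 < η := (by positivity : (0 : ℝ) ≤ 2 * √(2 * ε / g)).trans_lt hη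
  have hdiam : ∀ E ∈ Ioo (y - η) (y + η), ∀ E' ∈ Ioo (y - η) (y + η), L * |E' - E| ≤ 1 :=
    fun E hE E' hE' => (mul_le_mul_of_nonneg_left
      (abs_le.2 ⟨by linarith [hE.2, hE'.1], by linarith [hE.1, hE'.2]⟩) hL₀).trans hL
  have hvol := (h.ofReal_le_volume_abs_le_two hg hs (by nlinarith) hη₀ hL₀ hy).trans
    ((measure_mono (t := {E ∈ Ioo (y - η) (y + η) | 2 - ε ≤ |D E| ∧ |D E| ≤ 2})
      fun E hE => ⟨hE.1, hcon E hE.1, hE.2⟩).trans (h.volume_near_edge_le hg hs hε hdiam))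
  exact hη.not_ge ((ENNReal.ofReal_le_ofReal_iff (by positivity)).1 hvol)

end CrossingSpeed

end BandRegularOn

end Bands

section Measurability

lemma exists_measurability_threshold {α : Type*} [TopologicalSpace α]
    [TopologicalSpace.PseudoMetrizableSpace α] {f : ℝ → α} {x : ℝ}
    (hx : ¬ AEStronglyMeasurable f (volume.restrict (Ioc 0 x))) :
    ∃ a, 0 ≤ a ∧ AEStronglyMeasurable f (volume.restrict (Ioc 0 a)) ∧
      ∀ r, a < r → ¬ AEStronglyMeasurable f (volume.restrict (Ioc 0 r)) := by
  set A := {r : ℝ | 0 ≤ r ∧ AEStronglyMeasurable f (volume.restrict (Ioc 0 r))}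
  have hmono {r s : ℝ} (hrs : r ≤ s) (hs : AEStronglyMeasurable f (volume.restrict (Ioc 0 s))) :
      AEStronglyMeasurable f (volume.restrict (Ioc 0 r)) := hs.mono_set (Ioc_subset_Ioc_right hrs)
  have hA0 : (0 : ℝ) ∈ A := ⟨le_rfl, by simp⟩
  have hAbdd : BddAbove A := ⟨x, fun r hr => not_lt.1 fun hlt => hx (hmono hlt.le hr.2)⟩
  refine ⟨sSup A, le_csSup hAbdd hA0, ?_, fun r hr hr' =>
    hr.not_ge (le_csSup hAbdd ⟨(le_csSup hAbdd hA0).trans hr.le, hr'⟩)⟩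
  obtain ⟨r, -, hr, hrA⟩ := exists_seq_tendsto_sSup ⟨0, hA0⟩ hAbdd
  have hcover : Ioo 0 (sSup A) ⊆ ⋃ n, Ioc 0 (r n) := fun t ht => by
    obtain ⟨n, hn⟩ := (hr.eventually_const_lt ht.2).exists
    exact mem_iUnion.2 ⟨n, ht.1, hn.le⟩
  rw [← restrict_Ioo_eq_restrict_Ioc]
  exact (aestronglyMeasurable_iUnion_iff.2 fun n => (hrA n).2).mono_set hcover

namespace IsSolution

variable {V : ℝ → ℝ} {z : ℂ} {y yd : ℝ → ℂ} (h : IsSolution V z y yd)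
include h

lemma continuous : Continuous y := continuous_iff_continuousAt.2 fun x => (h.1 x).continuousAt

lemma isPrimitiveOn_deriv {a b : ℝ} (ha : IntervalIntegrable V volume 0 a)
    (hb : IntervalIntegrable V volume 0 b) :
    IsPrimitiveOn yd (fun t => ((V t : ℂ) - z) * y t) a b := by
  have hInt {c : ℝ} (hc : IntervalIntegrable V volume 0 c) :
      IntervalIntegrable (fun t => ((V t : ℂ) - z) * y t) volume 0 c :=
    (IntervalIntegrable.sub (f := fun t => (V t : ℂ)) ⟨hc.1.ofReal, hc.2.ofReal⟩
      intervalIntegrable_const).mul_continuousOn h.continuous.continuousOn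
  refine ⟨(hInt ha).symm.trans (hInt hb), fun x hx => ?_⟩
  rw [h.2.2 x, h.2.2 a, add_assoc, intervalIntegral.integral_add_adjacent_intervals (hInt ha)]
  exact ((hInt ha).symm.trans (hInt hb)).mono_set (uIcc_subset_uIcc left_mem_uIcc hx)

lemma isPrimitiveOn (a b : ℝ) : IsPrimitiveOn y yd a b := isPrimitiveOn_of_hasDerivAt h.1 h.2.1 a b

lemma im_wronskian_eq {a : ℝ} (ha : IntervalIntegrable V volume 0 a) :
    (y a).re * (yd a).im - (y a).im * (yd a).re =
      (y 0).re * (yd 0).im - (y 0).im * (yd 0).re - z.im * ∫ t in (0 : ℝ)..a, ‖y t‖ ^ 2 := by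
  have hy := h.isPrimitiveOn 0 a
  have hyd := h.isPrimitiveOn_deriv .refl ha
  have hW := ((hy.continuousLinearMap_comp Complex.reCLM).mul
    (hyd.continuousLinearMap_comp Complex.imCLM)).sub
    ((hy.continuousLinearMap_comp Complex.imCLM).mul (hyd.continuousLinearMap_comp Complex.reCLM))
  have hInt := hW.integral_eq_sub
  rw [← intervalIntegral.integral_const_mul]
  have hcongr : ∫ t in (0 : ℝ)..a, -(z.im * ‖y t‖ ^ 2) = _ :=
    (intervalIntegral.integral_congr fun t _ => ?_).trans hInt
  · rw [intervalIntegral.integral_neg] at hcongr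
    simp only [Complex.reCLM_apply, Complex.imCLM_apply] at hcongr
    linear_combination -hcongr
  · simp only [Complex.reCLM_apply, Complex.imCLM_apply, Complex.mul_re, Complex.mul_im,
      Complex.sub_re, Complex.sub_im, Complex.ofReal_re, Complex.ofReal_im, Complex.sq_norm,
      Complex.normSq_apply]
    ring

lemma deriv_ne_zero_of_neumann {a : ℝ} (ha : IntervalIntegrable V volume 0 a) (ha₀ : 0 < a)
    (hz : z.im ≠ 0) (hy₀ : y 0 ≠ 0) (hyd₀ : yd 0 = 0) : yd a ≠ 0 := by
  intro hyda
  have hpos : 0 < ∫ t in (0 : ℝ)..a, ‖y t‖ ^ 2 :=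
    intervalIntegral.integral_pos ha₀ (h.continuous.norm.pow 2).continuousOn
      (fun t _ => by positivity) ⟨0, left_mem_Icc.2 ha₀.le, by positivity⟩
  have hW := h.im_wronskian_eq ha
  simp only [hyda, hyd₀, Complex.zero_re, Complex.zero_im, mul_zero, sub_zero, zero_sub] at hW
  exact mul_ne_zero hz hpos.ne' (neg_eq_zero.1 hW.symm)

/-- Past the threshold the integrand `(V - z) y` is not measurable, so that its integral takes the
junk value `0`. -/
lemma deriv_eq_deriv_zero_of_gt_threshold {a x : ℝ} (ha₀ : 0 ≤ a)
    (ha : AEStronglyMeasurable V (volume.restrict (Ioc 0 a)))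
    (hna : ∀ r, a < r → ¬ AEStronglyMeasurable V (volume.restrict (Ioc 0 r)))
    (hne : ∀ᶠ r in 𝓝[>] a, y r ≠ 0) (hx : a < x) : yd x = yd 0 := by
  rw [h.2.2 x, intervalIntegral.integral_undef, add_zero]
  intro hInt
  obtain ⟨b, hab, hb⟩ := mem_nhdsGT_iff_exists_Ioo_subset.1 hne
  obtain ⟨c, hac, hc⟩ := exists_between (lt_min hab hx)
  obtain ⟨hcb, hcx⟩ := lt_min_iff.1 hc
  rw [intervalIntegrable_iff_integrableOn_Ioc_of_le (ha₀.trans hx.le)] at hInt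
  have hmeas : AEStronglyMeasurable (fun t => (((V t : ℂ) - z) * y t * (y t)⁻¹ + z).re)
      (volume.restrict (Ioc a c)) :=
    Complex.continuous_re.comp_aestronglyMeasurable
      (((hInt.aestronglyMeasurable.mono_set (Ioc_subset_Ioc ha₀ hcx.le)).mul
        h.continuous.measurable.inv.aestronglyMeasurable).add aestronglyMeasurable_const)
  have hV : AEStronglyMeasurable V (volume.restrict (Ioc a c)) := by
    refine hmeas.congr ((ae_restrict_iff' measurableSet_Ioc).2 (.of_forall fun t ht => ?_))
    dsimp only
    rw [mul_inv_cancel_right₀ (hb ⟨ht.1, ht.2.trans_lt hcb⟩), sub_add_cancel, Complex.ofReal_re]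
  refine hna c hac ?_
  rw [← Ioc_union_Ioc_eq_Ioc ha₀ hac.le]
  exact aestronglyMeasurable_union_iff.2 ⟨ha, hV⟩

omit h in
lemma isRealSolution_re {E : ℝ} (h : IsSolution V E y yd)
    (hV : ∀ a b, IntervalIntegrable V volume a b) :
    IsRealSolution (fun t => V t - E) (fun t => (y t).re) (fun t => (yd t).re) where
  hasDerivAt x := Complex.reCLM.hasFDerivAt.comp_hasDerivAt x (h.1 x)
  isPrimitiveOn_deriv a b := by
    simpa [Complex.mul_re] using
      (h.isPrimitiveOn_deriv (hV 0 a) (hV 0 b)).continuousLinearMap_comp Complex.reCLM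

omit h in
lemma isRealSolution_im {E : ℝ} (h : IsSolution V E y yd)
    (hV : ∀ a b, IntervalIntegrable V volume a b) :
    IsRealSolution (fun t => V t - E) (fun t => (y t).im) (fun t => (yd t).im) where
  hasDerivAt x := Complex.imCLM.hasFDerivAt.comp_hasDerivAt x (h.1 x)
  isPrimitiveOn_deriv a b := by
    simpa [Complex.mul_im] using
      (h.isPrimitiveOn_deriv (hV 0 a) (hV 0 b)).continuousLinearMap_comp Complex.imCLM

end IsSolution

namespace IsDiscriminant

variable {V : ℝ → ℝ} {T : ℝ} {Δ : ℂ → ℂ} (hΔ : IsDiscriminant T V Δ)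
include hΔ

/-- If `V` were nowhere measurable near `0`, every solution would be affine on `(0, ∞)`, so that
`Δ 0 = 2`. -/
lemma zero_mem_specSet_of_not_aestronglyMeasurable (hT : 0 < T)
    (hV : ∀ r, 0 < r → ¬ AEStronglyMeasurable V (volume.restrict (Ioc 0 r))) :
    0 ∈ specSet Δ := by
  obtain ⟨yN, yNd, yD, yDd, hN, hD, hN₀, hNd₀, -, hDd₀, hΔ₀⟩ := hΔ 0
  have hderiv {y yd : ℝ → ℂ} (h : IsSolution V 0 y yd) (hy : ∀ᶠ r in 𝓝[>] 0, y r ≠ 0) {x : ℝ}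
      (hx : 0 < x) : yd x = yd 0 :=
    h.deriv_eq_deriv_zero_of_gt_threshold le_rfl (by simp) hV hy hx
  have hNd {x : ℝ} (hx : 0 ≤ x) : yNd x = 0 := by
    rcases hx.eq_or_lt with rfl | hx
    · exact hNd₀
    · rw [← hNd₀]
      exact hderiv hN (nhdsWithin_le_nhds
        (hN.continuous.continuousAt.eventually_ne (by rw [hN₀]; exact one_ne_zero))) hx
  have hNT : yN T = 1 := by
    rw [← hN₀]
    refine constant_of_has_deriv_right_zero hN.continuous.continuousOn (fun x hx => ?_) T
      (right_mem_Icc.2 hT.le)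
    simpa only [hNd hx.1] using (hN.1 x).hasDerivWithinAt (s := Ici x)
  have hDT : yDd T = 1 := by
    rw [← hDd₀]
    exact hderiv hD (((hD.1 0).eventually_ne (by rw [hDd₀]; exact one_ne_zero)).filter_mono
      (nhdsWithin_mono 0 fun r hr => ne_of_gt hr)) hT
  simp only [specSet, mem_ofPred_eq, Complex.ofReal_zero, hΔ₀, hNT, hDT]
  norm_num

theorem aestronglyMeasurable (hT : 0 < T) (hV : LocallyIntegrable (fun t => V t ^ 2) volume)
    (h₀ : 0 ∉ specSet Δ) (x : ℝ) : AEStronglyMeasurable V (volume.restrict (Ioc 0 x)) := by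
  by_contra hx
  obtain ⟨a, ha₀, ha, hna⟩ := exists_measurability_threshold hx
  rcases ha₀.eq_or_lt with rfl | hpos
  · exact h₀ (hΔ.zero_mem_specSet_of_not_aestronglyMeasurable hT hna)
  obtain ⟨y, yd, -, -, h, -, hy₀, hyd₀, -⟩ := hΔ Complex.I
  have hInt : IntervalIntegrable V volume 0 a :=
    (intervalIntegrable_iff_integrableOn_Ioc_of_le ha₀).2 (((memLp_two_iff_integrable_sq ha).2
      ((hV.integrableOn_isCompact isCompact_Icc).mono_set Ioc_subset_Icc_self)).integrable
        (by simp))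
  have hyda : yd a ≠ 0 := h.deriv_ne_zero_of_neumann hInt hpos (by simp) (by simp [hy₀]) hyd₀
  have hne : ∀ᶠ r in 𝓝[>] a, y r ≠ 0 := ((h.1 a).eventually_ne hyda).filter_mono
    (nhdsWithin_mono a fun r hr => ne_of_gt hr)
  refine hyda (tendsto_nhds_unique ((h.2.1.tendsto a).mono_left nhdsWithin_le_nhds)
    (tendsto_const_nhds.congr' ?_) (l := 𝓝[>] a))
  filter_upwards [self_mem_nhdsWithin] with r hr
  rw [h.deriv_eq_deriv_zero_of_gt_threshold ha₀ ha hna hne hr, hyd₀]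

lemma memLp_two (hT : 0 < T) (hV : LocallyIntegrable (fun t => V t ^ 2) volume)
    (h₀ : 0 ∉ specSet Δ) (x : ℝ) : MemLp V 2 (volume.restrict (Ioc 0 x)) :=
  (memLp_two_iff_integrable_sq (hΔ.aestronglyMeasurable hT hV h₀ x)).2
    ((hV.integrableOn_isCompact isCompact_Icc).mono_set Ioc_subset_Icc_self)

theorem exists_fundamentalSystem (hV : ∀ a b, IntervalIntegrable V volume a b) :
    ∃ F : ∀ E, FundamentalSystem fun t => V t - E, ∀ E : ℝ, Δ E = (F E).trace T := by
  suffices ∀ E : ℝ, ∃ F : FundamentalSystem fun t => V t - E, Δ E = F.trace T by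
    choose F hF using this
    exact ⟨F, hF⟩
  intro E
  obtain ⟨yN, yNd, yD, yDd, hN, hD, hN₀, hNd₀, hD₀, hDd₀, hΔE⟩ := hΔ E
  let F : FundamentalSystem fun t => V t - E :=
    { u := fun t => (yN t).re, u' := fun t => (yNd t).re
      v := fun t => (yD t).re, v' := fun t => (yDd t).re
      isRealSolution_u := hN.isRealSolution_re hV
      isRealSolution_v := hD.isRealSolution_re hV
      u_zero := by simp [hN₀], u'_zero := by simp [hNd₀]
      v_zero := by simp [hD₀], v'_zero := by simp [hDd₀] }
  refine ⟨F, Complex.ext ?_ ?_⟩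
  · rw [hΔE, Complex.add_re, Complex.ofReal_re, FundamentalSystem.trace]
  · rw [hΔE, Complex.add_im, Complex.ofReal_im, F.eq_combination (hN.isRealSolution_im hV),
      F.deriv_eq_combination (hD.isRealSolution_im hV)]
    simp [hN₀, hNd₀, hD₀, hDd₀]

end IsDiscriminant

end Measurability

section BandRegularity

namespace FundamentalSystem

variable {V W : ℝ → ℝ} {I R x : ℝ} (F : ∀ E : ℝ, FundamentalSystem fun t => V t - E)
  (G : ∀ E : ℝ, FundamentalSystem fun t => W t - E)

lemma abs_trace_sub_trace_le_of_mem_Ioo {E₁ E₂ : ℝ} (hR : 0 ≤ R) (hx : 1 ≤ x)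
    (hE₁ : E₁ ∈ Ioo (x - 1 / 2) (x + 1 / 2)) (hE₂ : E₂ ∈ Ioo (x - 1 / 2) (x + 1 / 2))
    (hV : IntervalIntegrable V volume 0 R) (hW : IntervalIntegrable W volume 0 R)
    (hVI : ∫ t in (0 : ℝ)..R, |V t| ≤ I) (hWI : ∫ t in (0 : ℝ)..R, |W t| ≤ I) :
    |(G E₂).trace R - (F E₁).trace R| ≤ 8 * Real.exp (3 * I) / √x *
      ∫ t in (0 : ℝ)..R, |W t - E₂ - (V t - E₁)| := by
  have hsqrt {E : ℝ} (hE : E ∈ Ioo (x - 1 / 2) (x + 1 / 2)) : √x / 2 ≤ √E := by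
    refine Real.le_sqrt_of_sq_le ?_
    rw [div_pow, Real.sq_sqrt (by linarith)]
    linarith [hE.1]
  have hx₀ : 0 < √x := Real.sqrt_pos.2 (by linarith)
  convert (F E₁).abs_trace_sub_trace_le (G E₂) hR (by linarith [hE₁.1]) (by linarith [hE₂.1])
    (half_pos hx₀) (hsqrt hE₁) (hsqrt hE₂) hV hW hVI hWI using 2
  field_simp
  norm_num

theorem bandRegularOn_trace (hR : 1 ≤ R) (hx : 1 ≤ x) (hV : IntervalIntegrable V volume 0 R)
    (hI : ∫ t in (0 : ℝ)..R, |V t| ≤ I) :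
    BandRegularOn (fun E => (F E).trace R) (fun E => (F E).traceDeriv R)
      (8 * Real.exp (3 * I) / √x * R) ((1 / (2 * Real.exp I * (I + 2 * x * R))) ^ 3 / 48)
      (Ioo (x - 1 / 2) (x + 1 / 2)) := by
  have hI₀ : 0 ≤ I :=
    (intervalIntegral.integral_nonneg (by linarith) fun _ _ => abs_nonneg _).trans hI
  have hxR : 1 ≤ x * R := one_le_mul_of_one_le_of_one_le hx hR
  have hexp : 1 ≤ Real.exp I := Real.one_le_exp hI₀
  set η := 1 / (2 * Real.exp I * (I + 2 * x * R)) with hη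
  have hη₀ : 0 < η := by positivity
  have hη₂ : η ≤ 1 / 2 := one_div_le_one_div_of_le (by norm_num) (by nlinarith)
  have hgram {E : ℝ} (hE : E ∈ Ioo (x - 1 / 2) (x + 1 / 2)) : η ^ 3 / 48 ≤ (F E).gram R := by
    refine (F E).pow_three_le_gram hR (by linarith [hE.1]) hV hI hη₀.le hη₂ ?_
    calc Real.exp I * η * (I + E * R) ≤ Real.exp I * η * (I + 2 * x * R) := by
          gcongr
          linarith [hE.2]
      _ = 1 / 2 := by rw [hη]; field_simp
  have hgram₀ {E : ℝ} (hE : E ∈ Ioo (x - 1 / 2) (x + 1 / 2)) : 0 < (F E).gram R :=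
    (by positivity : 0 < η ^ 3 / 48).trans_le (hgram hE)
  refine ⟨fun E hE => hasDerivAt_trace F (by linarith) hV (by linarith [hE.1]),
    fun E₁ hE₁ E₂ hE₂ => ?_, fun E hE hD => ?_, fun E hE => eventually_abs_trace_lt_two F
      (by linarith) hV (by linarith [hE.1]) (hgram₀ hE)⟩
  · convert abs_trace_sub_trace_le_of_mem_Ioo F F (by linarith) hx hE₁ hE₂ hV hV hI hI using 1
    simp only [sub_sub_sub_cancel_left, intervalIntegral.integral_const, smul_eq_mul, sub_zero]
    rw [abs_sub_comm]
    ring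
  · refine (mul_le_mul_of_nonneg_right (hgram hE) ?_).trans
      ((F E).gram_mul_le_traceDeriv_sq (hgram₀ hE))
    nlinarith [sq_abs ((F E).trace R), abs_nonneg ((F E).trace R)]

end FundamentalSystem

lemma BandRegularOn.mono {D D' : ℝ → ℝ} {L L' g g' : ℝ} {s : Set ℝ} (h : BandRegularOn D D' L g s)
    (hL : L ≤ L') (hg : g' ≤ g) : BandRegularOn D D' L' g' s where
  hasDerivAt := h.hasDerivAt
  abs_sub_le E₁ hE₁ E₂ hE₂ :=
    (h.abs_sub_le E₁ hE₁ E₂ hE₂).trans (mul_le_mul_of_nonneg_right hL (abs_nonneg _))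
  mul_le_sq E hE hD := (mul_le_mul_of_nonneg_right hg (by
    nlinarith [sq_abs (D E), abs_nonneg (D E)])).trans (h.mul_le_sq E hE hD)
  eventually_abs_lt_two := h.eventually_abs_lt_two

lemma eight_mul_exp_mul_le {Q R : ℝ} (hR : 1 ≤ R) :
    8 * Real.exp (3 * (Q * R)) * R ≤ Real.exp ((3 * Q + 4) * R) := by
  have h₂ : 2 ≤ Real.exp R := by linarith [Real.add_one_le_exp R]
  calc 8 * Real.exp (3 * (Q * R)) * R = 2 ^ 3 * R * Real.exp (3 * (Q * R)) := by ring
    _ ≤ Real.exp R ^ 3 * Real.exp R * Real.exp (3 * (Q * R)) := by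
      gcongr
      linarith [Real.add_one_le_exp R]
    _ = Real.exp ((3 * Q + 4) * R) := by
      rw [← pow_succ, ← Real.exp_nat_mul, ← Real.exp_add]
      congr 1
      push_cast
      ring

lemma two_mul_exp_mul_add_le {Q R x : ℝ} (hQ : 0 ≤ Q) (hR : 1 ≤ R) (hx : 1 ≤ x) :
    2 * Real.exp (Q * R) * (Q * R + 2 * x * R) ≤ Real.exp ((2 * Q + 3) * R) * x := by
  have hsum : Q * R + 2 * x * R ≤ (Q + 2) * R * x := by
    linarith [le_mul_of_one_le_right (by positivity : 0 ≤ Q * R) hx]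
  have hQR : Q + 2 ≤ Real.exp ((Q + 1) * R) := by
    nlinarith [Real.add_one_le_exp ((Q + 1) * R)]
  calc 2 * Real.exp (Q * R) * (Q * R + 2 * x * R)
      ≤ Real.exp R * Real.exp (Q * R) * (Real.exp ((Q + 1) * R) * Real.exp R * x) := by
        gcongr
        · linarith [Real.add_one_le_exp R]
        · refine hsum.trans ?_
          gcongr
          linarith [Real.add_one_le_exp R]
    _ = Real.exp ((2 * Q + 3) * R) * x := by
      rw [← Real.exp_add, ← Real.exp_add, ← mul_assoc, ← Real.exp_add]
      congr 2
      ring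

lemma le_exp_of_one_le {R : ℝ} (hR : 1 ≤ R) : 2.7 ≤ Real.exp R := by
  linarith [Real.exp_one_gt_d9, Real.exp_le_exp.2 hR]

lemma exp_neg_div_le {Q R x : ℝ} (hQ : 0 ≤ Q) (hR : 1 ≤ R) (hx : 1 ≤ x) :
    Real.exp (-((6 * Q + 13) * R)) / x ^ 3 ≤
      (1 / (2 * Real.exp (Q * R) * (Q * R + 2 * x * R))) ^ 3 / 48 := by
  have h48 : 48 ≤ Real.exp R ^ 4 :=
    le_trans (by norm_num) (pow_le_pow_left₀ (by norm_num) (le_exp_of_one_le hR) 4)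
  rw [one_div, inv_pow, Real.exp_neg, div_eq_mul_inv, div_eq_mul_inv, ← mul_inv, ← mul_inv]
  refine inv_anti₀ (by positivity) ?_
  calc (2 * Real.exp (Q * R) * (Q * R + 2 * x * R)) ^ 3 * 48
      ≤ (Real.exp ((2 * Q + 3) * R) * x) ^ 3 * Real.exp R ^ 4 := by
        exact mul_le_mul (pow_le_pow_left₀ (by positivity) (two_mul_exp_mul_add_le hQ hR hx) 3)
          h48 (by norm_num) (by positivity)
    _ = Real.exp ((6 * Q + 13) * R) * x ^ 3 := by
      rw [mul_pow, ← Real.exp_nat_mul, ← Real.exp_nat_mul, mul_right_comm, ← Real.exp_add]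
      congr 2
      push_cast
      ring

end BandRegularity

section Tower

/-- Every point of `B` within distance `κ` of `x` is within distance `r` of `A`, and inside
`(x - δ, x + δ)` the set `B` contains `A` up to a set of measure at most `r`. -/
structure ApproximatesNear (A B : Set ℝ) (x δ κ r : ℝ) : Prop where
  exists_mem : ∀ y ∈ B, |y - x| ≤ κ → ∃ y' ∈ A, |y' - y| ≤ r
  volume_diff_le : volume (Ioo (x - δ) (x + δ) ∩ (A \ B)) ≤ ENNReal.ofReal r

namespace ApproximatesNear

variable {A B C : Set ℝ} {x δ κ κ' r r' : ℝ}

lemma refl (hr : 0 ≤ r) : ApproximatesNear A A x δ κ r :=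
  ⟨fun y hy _ => ⟨y, hy, by rwa [sub_self, abs_zero]⟩, by simp⟩

lemma mono (h : ApproximatesNear A B x δ κ r) (hκ : κ' ≤ κ) (hr : r ≤ r') :
    ApproximatesNear A B x δ κ' r' where
  exists_mem y hy hyx :=
    have ⟨y', hy', hle⟩ := h.exists_mem y hy (hyx.trans hκ)
    ⟨y', hy', hle.trans hr⟩
  volume_diff_le := h.volume_diff_le.trans (ENNReal.ofReal_le_ofReal hr)

lemma trans (h : ApproximatesNear A B x δ κ r) (h' : ApproximatesNear B C x δ κ' r')
    (hκ : κ' + r' ≤ κ) (hr : 0 ≤ r) (hr' : 0 ≤ r') : ApproximatesNear A C x δ κ' (r + r') where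
  exists_mem z hz hzx := by
    obtain ⟨y, hy, hyz⟩ := h'.exists_mem z hz hzx
    obtain ⟨w, hw, hwy⟩ := h.exists_mem y hy (by linarith [abs_sub_le y z x])
    exact ⟨w, hw, by linarith [abs_sub_le w y z]⟩
  volume_diff_le := by
    have hcover : Ioo (x - δ) (x + δ) ∩ (A \ C) ⊆
        Ioo (x - δ) (x + δ) ∩ (A \ B) ∪ Ioo (x - δ) (x + δ) ∩ (B \ C) := by
      rw [← inter_union_distrib_left]
      exact inter_subset_inter_right _ (sdiff_triangle A B C)
    rw [ENNReal.ofReal_add hr hr']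
    exact (measure_mono hcover).trans
      ((measure_union_le _ _).trans (add_le_add h.volume_diff_le h'.volume_diff_le))

lemma ofReal_sub_le_volume {v : ℝ} (h : ApproximatesNear A B x δ κ r) (hr : 0 ≤ r)
    (hv : ENNReal.ofReal v ≤ volume (Ioo (x - δ) (x + δ) ∩ A)) :
    ENNReal.ofReal (v - r) ≤ volume (Ioo (x - δ) (x + δ) ∩ B) := by
  have hcover : Ioo (x - δ) (x + δ) ∩ A ⊆
      Ioo (x - δ) (x + δ) ∩ B ∪ Ioo (x - δ) (x + δ) ∩ (A \ B) := by
    rw [← inter_union_distrib_left, union_sdiff_self]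
    exact inter_subset_inter_right _ subset_union_right
  rw [ENNReal.ofReal_sub _ hr]
  exact tsub_le_iff_right.2 (hv.trans ((measure_mono hcover).trans
    ((measure_union_le _ _).trans (add_le_add_right h.volume_diff_le _))))

/-- Grouping the indices into blocks of equal `T` and going down block by block from `N`, the
errors `r (T k)` add up to at most twice the first one. -/
theorem of_steps {S : ℕ → Set ℝ} {T : ℕ → ℝ} {r : ℝ → ℝ} {n N : ℕ} (hr : ∀ t, 0 ≤ r t)
    (hdecay : ∀ k, T k ≠ T (k + 1) → 2 * r (T (k + 1)) ≤ r (T k))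
    (hδ : ∀ j, n ≤ j → 2 * r (T (j + 1)) ≤ δ)
    (hstep : ∀ j k, n ≤ j → j < k → T k = T (j + 1) →
      ApproximatesNear (S j) (S k) x δ δ (r (T k))) {j : ℕ} (hnj : n ≤ j) (hjN : j < N) :
    ApproximatesNear (S j) (S N) x δ 0 (2 * r (T (j + 1))) := by
  induction hm : N - j using Nat.strong_induction_on generalizing j with
  | _ m ih =>
    obtain ⟨k, hjk, hkN, hTk, hmax⟩ :
        ∃ k, j < k ∧ k ≤ N ∧ T k = T (j + 1) ∧ (k < N → T (k + 1) ≠ T (j + 1)) :=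
      ⟨Nat.findGreatest (fun k => T k = T (j + 1)) N, Nat.le_findGreatest hjN rfl,
        Nat.findGreatest_le N, Nat.findGreatest_spec (P := fun k => T k = T (j + 1)) hjN rfl,
        Nat.findGreatest_is_greatest (P := fun k => T k = T (j + 1)) (Nat.lt_succ_self _)⟩
    have hjk' := hstep j k hnj hjk hTk
    rw [← hTk]
    rcases hkN.eq_or_lt with rfl | hlt
    · exact hjk'.mono (by linarith [hr (T (j + 1)), hδ j hnj])
        (by linarith [hr (T k)])
    · have hnk := hnj.trans hjk.le
      have hk := ih (N - k) (by omega) hnk hlt rfl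
      have hdec := hdecay k (by rw [hTk]; exact (hmax hlt).symm)
      exact (hjk'.trans hk (by rw [zero_add]; exact hδ k hnk) (hr _)
        (by linarith [hr (T (k + 1))])).mono le_rfl (by linarith)

end ApproximatesNear

lemma BandRegularOn.volume_diff_le {D₁ D₁' D₂ : ℝ → ℝ} {x δ ε L g : ℝ}
    (h₁ : BandRegularOn D₁ D₁' L g (Ioo (x - 1 / 2) (x + 1 / 2))) (hg : 0 < g) (hL : 1 ≤ L * δ)
    (hδ₀ : 0 < δ) (hδ : δ ≤ 1 / 8) (hε : ε ≤ 1)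
    (hclose : ∀ E ∈ Ioo (x - 1 / 2) (x + 1 / 2), |D₂ E - D₁ E| ≤ ε) :
    volume (Ioo (x - δ) (x + δ) ∩ ({E | |D₁ E| ≤ 2} \ {E | |D₂ E| ≤ 2})) ≤
      ENNReal.ofReal (3 * (L * δ) * (2 * √(2 * ε / g))) := by
  have hL₀ : 0 < L := pos_of_mul_pos_left (by linarith) hδ₀.le
  set M := ⌈2 * (L * δ)⌉₊
  have hMlow : 2 * δ ≤ M * L⁻¹ := by
    rw [← div_eq_mul_inv, le_div_iff₀ hL₀]
    linarith [Nat.le_ceil (2 * (L * δ))]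
  have hMup : M ≤ 3 * (L * δ) := by linarith [Nat.ceil_lt_add_one (a := 2 * (L * δ)) (by linarith)]
  have hMup' : M * L⁻¹ ≤ 3 * δ := by
    rw [← div_eq_mul_inv, div_le_iff₀ hL₀]
    linarith
  have hs : Ioc (x - δ) (x - δ + M * L⁻¹) ⊆ Ioo (x - 1 / 2) (x + 1 / 2) := fun E hE =>
    ⟨by linarith [hE.1], by linarith [hE.2]⟩
  refine (measure_mono ?_).trans ((h₁.volume_near_edge_Ioc_le hg hε hL₀.le (inv_nonneg.2 hL₀.le)
    (mul_inv_cancel₀ hL₀.ne').le M hs).trans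
      (ENNReal.ofReal_le_ofReal (mul_le_mul_of_nonneg_right hMup (by positivity))))
  rintro E ⟨hE, hE₁, hE₂⟩
  have hEM : E ∈ Ioc (x - δ) (x - δ + M * L⁻¹) := ⟨hE.1, by linarith [hE.2]⟩
  rw [mem_ofPred_eq, not_le] at hE₂
  refine ⟨hEM, ?_, hE₁⟩
  linarith [hclose E (hs hEM), abs_sub_abs_le_abs_sub (D₂ E) (D₁ E)]

/-- One step of the tower: a perturbation of a discriminant by `ε` moves the bands by at most `η`
and destroys them on a set of measure at most `3 L δ η`. -/
theorem BandRegularOn.approximatesNear {D₁ D₁' D₂ D₂' : ℝ → ℝ} {x δ ε η r L g : ℝ}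
    (h₁ : BandRegularOn D₁ D₁' L g (Ioo (x - 1 / 2) (x + 1 / 2)))
    (h₂ : BandRegularOn D₂ D₂' L g (Ioo (x - 1 / 2) (x + 1 / 2))) (hg : 0 < g) (hL : 1 ≤ L * δ)
    (hδ₀ : 0 < δ) (hδ : δ ≤ 1 / 8) (hε : ε ≤ 1)
    (hclose : ∀ E ∈ Ioo (x - 1 / 2) (x + 1 / 2), |D₂ E - D₁ E| ≤ ε)
    (hη : 2 * √(2 * ε / g) < η) (hLη : L * (2 * η) ≤ 1) (hηδ : η ≤ δ) (hr : 3 * (L * δ) * η ≤ r) :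
    ApproximatesNear {E | |D₁ E| ≤ 2} {E | |D₂ E| ≤ 2} x δ δ r := by
  have hL₀ : 0 < L := pos_of_mul_pos_left (by linarith) hδ₀.le
  have hηr : η ≤ r := by
    have hη₀ : 0 ≤ η := (by positivity : (0 : ℝ) ≤ 2 * √(2 * ε / g)).trans hη.le
    nlinarith
  refine ⟨fun y hy hyx => ?_, (h₁.volume_diff_le hg hL hδ₀ hδ hε hclose).trans
    (ENNReal.ofReal_le_ofReal ((mul_le_mul_of_nonneg_left hη.le (by positivity)).trans hr))⟩
  have hyx' := abs_le.1 hyx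
  have hs : Ioo (y - η) (y + η) ⊆ Ioo (x - 1 / 2) (x + 1 / 2) :=
    Ioo_subset_Ioo (by linarith) (by linarith)
  obtain ⟨y', hy', hDy'⟩ := h₂.exists_abs_lt_two_sub hg hs hLη hL₀.le hε hη hy
  refine ⟨y', ?_, abs_le.2 ⟨by linarith [hy'.1], by linarith [hy'.2]⟩⟩
  rw [mem_ofPred_eq]
  linarith [hclose y' (hs hy'), abs_sub_abs_le_abs_sub (D₁ y') (D₂ y'),
    abs_sub_comm (D₁ y') (D₂ y')]

section ExponentialScale

variable {c γ θ δ x R : ℝ}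

lemma two_mul_sqrt_two_mul_div_lt (hR : 1 ≤ R) (hx : 1 ≤ x) (hδ₀ : 0 < δ)
    (hδθ : δ ≤ θ) (hθ : θ ≤ 1) (hδx : √x ≤ δ * Real.exp (c * R)) :
    2 * √(2 * (θ * Real.exp (-((10 * c + γ + 11) * R))) / (Real.exp (-(γ * R)) / x ^ 3)) <
      θ * Real.exp (-((2 * c + 4) * R)) := by
  have hθ₀ : 0 < θ := hδ₀.trans_le hδθ
  have hx₃ : x ^ 3 ≤ θ * Real.exp (6 * c * R) := calc
    x ^ 3 = √x ^ 6 := by rw [show 6 = 2 * 3 by rfl, pow_mul, Real.sq_sqrt (by linarith)]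
    _ ≤ (δ * Real.exp (c * R)) ^ 6 := pow_le_pow_left₀ (Real.sqrt_nonneg x) hδx 6
    _ = δ ^ 6 * Real.exp (6 * c * R) := by
      rw [mul_pow, ← Real.exp_nat_mul, Nat.cast_ofNat, mul_assoc]
    _ ≤ θ * Real.exp (6 * c * R) := by
      gcongr
      exact (pow_le_of_le_one hδ₀.le (hδθ.trans hθ) (by norm_num)).trans hδθ
  have h₈ : 8 < Real.exp (3 * R) := by
    rw [← Nat.cast_ofNat (n := 3), Real.exp_nat_mul]
    exact lt_of_lt_of_le (by norm_num) (pow_le_pow_left₀ (by norm_num) (le_exp_of_one_le hR) 3)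
  rw [← lt_div_iff₀' two_pos, Real.sqrt_lt' (by positivity)]
  calc 2 * (θ * Real.exp (-((10 * c + γ + 11) * R))) / (Real.exp (-(γ * R)) / x ^ 3)
      = 2 * θ * Real.exp (-((10 * c + 11) * R)) * x ^ 3 := by
        rw [show -((10 * c + γ + 11) * R) = -((10 * c + 11) * R) + -(γ * R) by ring, Real.exp_add]
        field_simp
    _ ≤ 2 * θ * Real.exp (-((10 * c + 11) * R)) * (θ * Real.exp (6 * c * R)) := by gcongr
    _ = 8 * (θ ^ 2 / 4 * Real.exp (-((4 * c + 11) * R))) := by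
      rw [show -((4 * c + 11) * R) = -((10 * c + 11) * R) + 6 * c * R by ring, Real.exp_add]
      ring
    _ < Real.exp (3 * R) * (θ ^ 2 / 4 * Real.exp (-((4 * c + 11) * R))) := by gcongr
    _ = (θ * Real.exp (-((2 * c + 4) * R)) / 2) ^ 2 := by
      rw [mul_left_comm, ← Real.exp_add, div_pow, mul_pow, ← Real.exp_nat_mul]
      ring_nf

lemma two_mul_exp_neg_le_one {s : ℝ} (hs : 1 ≤ s) : 2 * Real.exp (-s) ≤ 1 := by
  rw [Real.exp_neg, ← div_eq_mul_inv, div_le_one (Real.exp_pos s)]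
  linarith [Real.add_one_le_exp s]

/-- The step of the tower at period `R`, with all constants exponential in `R`; the hypothesis
`√x ≤ δ * exp (c * R)` says that the scale `δ` is coarse for the period `R`. -/
theorem BandRegularOn.approximatesNear_of_exp {D₁ D₁' D₂ D₂' : ℝ → ℝ}
    (h₁ : BandRegularOn D₁ D₁' (Real.exp (c * R) / √x) (Real.exp (-(γ * R)) / x ^ 3)
      (Ioo (x - 1 / 2) (x + 1 / 2)))
    (h₂ : BandRegularOn D₂ D₂' (Real.exp (c * R) / √x) (Real.exp (-(γ * R)) / x ^ 3)
      (Ioo (x - 1 / 2) (x + 1 / 2)))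
    (hc : 0 ≤ c) (hγ : 0 ≤ γ) (hR : 1 ≤ R) (hx : 1 ≤ x) (hδ₀ : 0 < δ) (hδ : δ ≤ 1 / 8)
    (hδθ : δ ≤ θ) (hθ : θ ≤ 1) (hδx : √x ≤ δ * Real.exp (c * R))
    (hclose : ∀ E ∈ Ioo (x - 1 / 2) (x + 1 / 2),
      |D₂ E - D₁ E| ≤ θ * Real.exp (-((10 * c + γ + 11) * R))) :
    ApproximatesNear {E | |D₁ E| ≤ 2} {E | |D₂ E| ≤ 2} x δ δ (θ * Real.exp (-((c + 2) * R))) := by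
  have hθ₀ : 0 < θ := hδ₀.trans_le hδθ
  have hsqrt : 1 ≤ √x := Real.one_le_sqrt.2 hx
  have hL : Real.exp (c * R) / √x ≤ Real.exp (c * R) := div_le_self (Real.exp_pos _).le hsqrt
  have hsmall {s : ℝ} (hs : 1 ≤ s) : 2 * (θ * Real.exp (-s)) ≤ 1 := by
    nlinarith [two_mul_exp_neg_le_one hs, Real.exp_pos (-s)]
  have hcR : 0 ≤ c * R := by positivity
  have hexp : Real.exp (c * R) * Real.exp (-((2 * c + 4) * R)) = Real.exp (-((c + 4) * R)) := by
    rw [← Real.exp_add]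
    ring_nf
  refine h₁.approximatesNear h₂ (by positivity) ?_ hδ₀ hδ ?_ hclose
    (two_mul_sqrt_two_mul_div_lt hR hx hδ₀ hδθ hθ hδx) ?_ ?_ ?_
  · rw [div_mul_eq_mul_div, mul_comm, one_le_div (by linarith)]
    exact hδx
  · linarith [hsmall (s := (10 * c + γ + 11) * R) (by nlinarith),
      (by positivity : 0 < θ * Real.exp (-((10 * c + γ + 11) * R)))]
  · calc Real.exp (c * R) / √x * (2 * (θ * Real.exp (-((2 * c + 4) * R))))
        ≤ Real.exp (c * R) * (2 * (θ * Real.exp (-((2 * c + 4) * R)))) := by gcongr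
      _ = 2 * (θ * Real.exp (-((c + 4) * R))) := by rw [← hexp]; ring
      _ ≤ 1 := hsmall (by nlinarith)
  · refine le_of_mul_le_mul_left ?_ (Real.exp_pos (c * R))
    rw [mul_left_comm, hexp, mul_comm _ δ]
    linarith [hsmall (s := (c + 4) * R) (by nlinarith),
      (by positivity : 0 < θ * Real.exp (-((c + 4) * R)))]
  · calc 3 * (Real.exp (c * R) / √x * δ) * (θ * Real.exp (-((2 * c + 4) * R)))
        ≤ 3 * (Real.exp (c * R) * (1 / 8)) * (θ * Real.exp (-((2 * c + 4) * R))) := by gcongr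
      _ = 3 / 8 * (θ * Real.exp (-((c + 4) * R))) := by rw [← hexp]; ring
      _ ≤ 1 * (θ * Real.exp (-((c + 2) * R))) := by gcongr <;> norm_num
      _ = θ * Real.exp (-((c + 2) * R)) := one_mul _

end ExponentialScale

/-- The discriminants `D n m` of the `n`-th member of a tower of periodic operators, taken over the
period `T m` of a later member, together with the quantitative control near the energy `x` at
which the measures of the spectra `S n` are compared. -/
structure DiscriminantTower (S : ℕ → Set ℝ) (D D' : ℕ → ℕ → ℝ → ℝ) (T : ℕ → ℝ)
    (x c γ θ : ℝ) : Prop where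
  one_le_period : ∀ n, 1 ≤ T n
  monotone_period : Monotone T
  two_mul_period_le : ∀ n, T n ≠ T (n + 1) → 2 * T n ≤ T (n + 1)
  eq_setOf : ∀ n m, n ≤ m → S n = {E | |D n m E| ≤ 2}
  bandRegularOn : ∀ n m, n ≤ m → BandRegularOn (D n m) (D' n m) (Real.exp (c * T m) / √x)
    (Real.exp (-(γ * T m)) / x ^ 3) (Ioo (x - 1 / 2) (x + 1 / 2))
  abs_sub_le : ∀ j k, j < k → T k = T (j + 1) → ∀ E ∈ Ioo (x - 1 / 2) (x + 1 / 2),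
    |D k k E - D j k E| ≤ θ * Real.exp (-((10 * c + γ + 11) * T k))

namespace DiscriminantTower

variable {S : ℕ → Set ℝ} {D D' : ℕ → ℕ → ℝ → ℝ} {T : ℕ → ℝ} {x c γ θ δ : ℝ}
  (h : DiscriminantTower S D D' T x c γ θ)
include h

lemma two_mul_stepError_le (hc : 0 ≤ c) (hθ₀ : 0 ≤ θ) {k : ℕ} (hk : T k ≠ T (k + 1)) :
    2 * (θ * Real.exp (-((c + 2) * T (k + 1)))) ≤ θ * Real.exp (-((c + 2) * T k)) := by
  have hT := h.one_le_period k
  have hdouble := h.two_mul_period_le k hk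
  calc 2 * (θ * Real.exp (-((c + 2) * T (k + 1))))
      ≤ 2 * (θ * Real.exp (-((c + 2) * T k) - (c + 2) * T k)) := by
        gcongr
        nlinarith
    _ = 2 * Real.exp (-((c + 2) * T k)) * (θ * Real.exp (-((c + 2) * T k))) := by
      rw [sub_eq_add_neg, Real.exp_add]
      ring
    _ ≤ 1 * (θ * Real.exp (-((c + 2) * T k))) := by
      gcongr
      exact two_mul_exp_neg_le_one (by nlinarith)
    _ = θ * Real.exp (-((c + 2) * T k)) := one_mul _

omit h in
lemma four_mul_stepError_le {R : ℝ} (hR : 1 ≤ R) (hx : 1 ≤ x) (hθ₀ : 0 ≤ θ)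
    (hδx : √x ≤ δ * Real.exp (c * R)) :
    2 * (2 * (θ * Real.exp (-((c + 2) * R)))) ≤ θ * δ := by
  have hδ : Real.exp (-(c * R)) ≤ δ := by
    rw [Real.exp_neg, inv_le_iff_one_le_mul₀ (Real.exp_pos _)]
    exact (Real.one_le_sqrt.2 hx).trans hδx
  have hR₁ := two_mul_exp_neg_le_one hR
  calc 2 * (2 * (θ * Real.exp (-((c + 2) * R))))
      = θ * ((2 * Real.exp (-R)) * (2 * Real.exp (-R)) * Real.exp (-(c * R))) := by
        rw [show -((c + 2) * R) = -R + -R + -(c * R) by ring, Real.exp_add, Real.exp_add]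
        ring
    _ ≤ θ * (1 * 1 * δ) := by gcongr
    _ = θ * δ := by ring

/-- From the last index `n` whose period is fine for the scale `δ`, all later steps are coarse. -/
theorem exists_approximatesNear (hx : 1 ≤ x) (hc : 0 ≤ c) (hγ : 0 ≤ γ) (hδ₀ : 0 < δ)
    (hδ : δ ≤ 1 / 8) (hδθ : δ ≤ θ) (hθ : θ ≤ 1) (hδT : δ * Real.exp (c * T 0) ≤ 1) (N : ℕ) :
    ∃ n ≤ N, δ * Real.exp (c * T n) ≤ √x ∧
      ∃ r, 0 ≤ r ∧ 2 * r ≤ θ * δ ∧ ApproximatesNear (S n) (S N) x δ 0 r := by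
  have hθ₀ : 0 < θ := hδ₀.trans_le hδθ
  let P k := δ * Real.exp (c * T k) ≤ √x
  have hP₀ : P 0 := hδT.trans (Real.one_le_sqrt.2 hx)
  classical
  obtain ⟨n, hnN, hfine, hmax⟩ : ∃ n ≤ N, P n ∧ ∀ k, n < k → k ≤ N → ¬P k :=
    ⟨Nat.findGreatest P N, Nat.findGreatest_le N, Nat.findGreatest_spec N.zero_le hP₀,
      fun _ => Nat.findGreatest_is_greatest⟩
  refine ⟨n, hnN, hfine, ?_⟩
  rcases hnN.eq_or_lt with rfl | hlt
  · exact ⟨0, le_rfl, by simpa only [mul_zero] using (mul_pos hθ₀ hδ₀).le, .refl le_rfl⟩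
  have hcoarse {k : ℕ} (hk : n < k) : √x ≤ δ * Real.exp (c * T k) :=
    (not_le.1 (hmax (n + 1) n.lt_succ_self hlt)).le.trans (by
      gcongr
      exact h.monotone_period hk)
  have hbound {k : ℕ} (hk : n < k) : 2 * (2 * (θ * Real.exp (-((c + 2) * T k)))) ≤ θ * δ :=
    four_mul_stepError_le (h.one_le_period k) hx hθ₀.le (hcoarse hk)
  refine ⟨2 * (θ * Real.exp (-((c + 2) * T (n + 1)))), by positivity, hbound n.lt_succ_self,
    ApproximatesNear.of_steps (T := T) (r := fun t => θ * Real.exp (-((c + 2) * t)))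
      (fun t => by positivity) (fun k => h.two_mul_stepError_le hc hθ₀.le) (fun j hj => ?_)
      (fun j k hj hjk hT => ?_) le_rfl hlt⟩
  · nlinarith [hbound (Nat.lt_succ_of_le hj), (by positivity :
      0 < θ * Real.exp (-((c + 2) * T (j + 1))))]
  · rw [h.eq_setOf j k hjk.le, h.eq_setOf k k le_rfl]
    exact (h.bandRegularOn j k hjk.le).approximatesNear_of_exp (h.bandRegularOn k k le_rfl) hc hγ
      (h.one_le_period k) hx hδ₀ hδ hδθ hθ (hcoarse (hj.trans_lt hjk)) (h.abs_sub_le j k hjk hT)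

theorem ofReal_le_volume (hx : 1 ≤ x) (hc : 0 ≤ c) (hγ : 0 ≤ γ) (hδ₀ : 0 < δ)
    (hδ : δ ≤ 1 / 8) (hδθ : δ ≤ θ) (hθ : θ ≤ 1) (hδT : δ * Real.exp (c * T 0) ≤ 1) {N : ℕ}
    (hxN : x ∈ S N) :
    ENNReal.ofReal ((1 - θ) * δ) ≤ volume (Ioo (x - δ) (x + δ) ∩ S N) := by
  obtain ⟨n, -, hfine, r, hr, hrθ, hnear⟩ :=
    h.exists_approximatesNear hx hc hγ hδ₀ hδ hδθ hθ hδT N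
  obtain ⟨y, hy, hyx⟩ := hnear.exists_mem x hxN (by rw [sub_self, abs_zero])
  obtain ⟨hxy, hyx⟩ := abs_le.1 hyx
  have hrδ : r < δ := by nlinarith
  rw [h.eq_setOf n n le_rfl] at hy
  have hsub : Ioo (y - (δ - r)) (y + (δ - r)) ⊆ Ioo (x - δ) (x + δ) :=
    Ioo_subset_Ioo (by linarith) (by linarith)
  have hvol := (h.bandRegularOn n n le_rfl).ofReal_le_volume_abs_le_two (by positivity)
    (hsub.trans (Ioo_subset_Ioo (by linarith) (by linarith))) ?_ (sub_pos.2 hrδ) (by positivity) hy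
  · rw [← h.eq_setOf n n le_rfl] at hvol
    refine (ENNReal.ofReal_le_ofReal ?_).trans (hnear.ofReal_sub_le_volume hr
      (hvol.trans (measure_mono (inter_subset_inter_left _ hsub))))
    linarith
  · rw [div_mul_eq_mul_div, div_le_one (by positivity)]
    refine (mul_le_mul_of_nonneg_left (sub_le_self δ hr) (Real.exp_pos _).le).trans ?_
    rwa [mul_comm]

end DiscriminantTower

end Tower

section Potentials

lemma besNorm_nonneg (T : ℝ) (W : ℝ → ℝ) : 0 ≤ besNorm T W := Real.sqrt_nonneg _

lemma intervalIntegrable_of_memLp_two {W : ℝ → ℝ} {R : ℝ} (hR : 0 ≤ R)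
    (hW : MemLp W 2 (volume.restrict (Ioc 0 R))) : IntervalIntegrable W volume 0 R :=
  (intervalIntegrable_iff_integrableOn_Ioc_of_le hR).2 (hW.integrable one_le_two)

lemma integral_abs_le_mul_besNorm {T : ℝ} {W : ℝ → ℝ} (hT : 0 < T)
    (hW : MemLp W 2 (volume.restrict (Ioc 0 T))) :
    ∫ t in (0 : ℝ)..T, |W t| ≤ T * besNorm T W := by
  have hInt := (intervalIntegrable_of_memLp_two hT.le hW).abs
  have hsq : IntervalIntegrable (fun t => W t ^ 2) volume 0 T :=
    (intervalIntegrable_iff_integrableOn_Ioc_of_le hT.le).2 hW.integrable_sq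
  set m := (∫ t in (0 : ℝ)..T, |W t|) / T with hm
  have hmT : ∫ t in (0 : ℝ)..T, |W t| = T * m := by rw [hm, mul_div_cancel₀ _ hT.ne']
  have hvar : 0 ≤ ∫ t in (0 : ℝ)..T, (W t ^ 2 - 2 * m * |W t| + m ^ 2) :=
    intervalIntegral.integral_nonneg hT.le fun t _ => by
      nlinarith [sq_nonneg (|W t| - m), sq_abs (W t)]
  rw [intervalIntegral.integral_add (hsq.sub (hInt.const_mul _)) intervalIntegrable_const,
    intervalIntegral.integral_sub hsq (hInt.const_mul _), intervalIntegral.integral_const_mul,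
    intervalIntegral.integral_const, hmT, sub_zero, smul_eq_mul] at hvar
  rw [hmT]
  refine mul_le_mul_of_nonneg_left (Real.le_sqrt_of_sq_le ?_) hT.le
  rw [one_div_mul_eq_div, le_div_iff₀ hT]
  linarith

lemma sum_Ico_le_mul_exp_neg {T b : ℕ → ℝ} {K θ : ℝ} (hT : ∀ n, 1 ≤ T n) (hmono : Monotone T)
    (hb : ∀ n, 0 ≤ b n) (hsum : Summable fun n => T (n + 1) ^ 6 * Real.exp (K * T (n + 1)) * b n)
    (hθ : ∑' n, T (n + 1) ^ 6 * Real.exp (K * T (n + 1)) * b n ≤ θ) {j k : ℕ}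
    (hTk : T k = T (j + 1)) :
    ∑ i ∈ Finset.Ico j k, b i ≤ θ * Real.exp (-(K * T k)) := by
  have hnonneg (n : ℕ) : 0 ≤ T (n + 1) ^ 6 * Real.exp (K * T (n + 1)) * b n :=
    mul_nonneg (mul_nonneg (pow_nonneg (zero_le_one.trans (hT _)) 6) (Real.exp_pos _).le) (hb n)
  rw [Real.exp_neg, ← div_eq_mul_inv, le_div_iff₀' (Real.exp_pos _), Finset.mul_sum]
  refine (Finset.sum_le_sum fun i hi => ?_).trans
    ((hsum.sum_le_tsum _ fun n _ => hnonneg n).trans hθ)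
  obtain ⟨hji, hik⟩ := Finset.mem_Ico.1 hi
  rw [show T (i + 1) = T k from (hmono hik).antisymm (hTk.trans_le (hmono (by omega)))]
  exact mul_le_mul_of_nonneg_right (le_mul_of_one_le_left (Real.exp_pos _).le
    (one_le_pow₀ (hT k))) (hb i)

/-- Potentials `V n` of period `T n ≥ 1`, square integrable over bounded intervals and of
Besicovitch norm at most `Q`, such that each period divides the next one. -/
structure PeriodicTower (V : ℕ → ℝ → ℝ) (T : ℕ → ℝ) (Q : ℝ) : Prop where
  one_le_period : ∀ n, 1 ≤ T n
  exists_period_succ_eq : ∀ n, ∃ k : ℕ, 0 < k ∧ T (n + 1) = k * T n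
  periodic : ∀ n, Function.Periodic (V n) (T n)
  memLp_two : ∀ n R, MemLp (V n) 2 (volume.restrict (Ioc 0 R))
  besNorm_le : ∀ n, besNorm (T n) (V n) ≤ Q

namespace PeriodicTower

variable {V : ℕ → ℝ → ℝ} {T : ℕ → ℝ} {Q : ℝ} (h : PeriodicTower V T Q)
include h

lemma period_pos (n : ℕ) : 0 < T n := one_pos.trans_le (h.one_le_period n)

lemma exists_period_eq {n m : ℕ} (hnm : n ≤ m) : ∃ k : ℕ, k ≠ 0 ∧ T m = k * T n := by
  induction m, hnm using Nat.le_induction with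
  | base => exact ⟨1, one_ne_zero, by rw [Nat.cast_one, one_mul]⟩
  | succ m _ ih =>
    obtain ⟨k, hk, hkm⟩ := ih
    obtain ⟨l, hl, hlm⟩ := h.exists_period_succ_eq m
    exact ⟨l * k, mul_ne_zero hl.ne' hk, by rw [hlm, hkm, Nat.cast_mul, mul_assoc]⟩

lemma monotone_period : Monotone T := monotone_nat_of_le_succ fun n => by
  obtain ⟨k, hk, hkn⟩ := h.exists_period_succ_eq n
  rw [hkn]
  exact le_mul_of_one_le_left (h.period_pos n).le (Nat.one_le_cast.2 hk)

lemma two_mul_period_le {n : ℕ} (hn : T n ≠ T (n + 1)) : 2 * T n ≤ T (n + 1) := by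
  obtain ⟨k, hk, hkn⟩ := h.exists_period_succ_eq n
  have hk₂ : 2 ≤ k := Nat.lt_of_le_of_ne hk fun hk₁ =>
    hn (by rw [hkn, ← hk₁, Nat.cast_one, one_mul])
  rw [hkn]
  exact mul_le_mul_of_nonneg_right (Nat.ofNat_le_cast.2 hk₂) (h.period_pos n).le

lemma intervalIntegrable (n : ℕ) (a b : ℝ) : IntervalIntegrable (V n) volume a b :=
  (h.periodic n).intervalIntegrable₀ (h.period_pos n).ne'
    (intervalIntegrable_of_memLp_two (h.period_pos n).le (h.memLp_two n _)) a b

lemma integral_abs_le {n m : ℕ} (hnm : n ≤ m) : ∫ t in (0 : ℝ)..T m, |V n t| ≤ Q * T m := by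
  obtain ⟨k, -, hkm⟩ := h.exists_period_eq hnm
  have hperiodic := ((h.periodic n).comp abs).intervalIntegral_add_zsmul_eq k 0
    fun a b => (h.intervalIntegrable n a b).abs
  simp only [zero_add, natCast_zsmul, nsmul_eq_mul, Function.comp_apply] at hperiodic
  rw [hkm, hperiodic, mul_left_comm]
  refine mul_le_mul_of_nonneg_left ?_ k.cast_nonneg
  rw [mul_comm]
  exact (integral_abs_le_mul_besNorm (h.period_pos n) (h.memLp_two n _)).trans
    (mul_le_mul_of_nonneg_left (h.besNorm_le n) (h.period_pos n).le)

lemma integral_abs_sub_le {j k : ℕ} (hjk : j ≤ k) (hTk : T k = T (j + 1)) :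
    ∫ t in (0 : ℝ)..T k, |V k t - V j t| ≤
      T k * ∑ i ∈ Finset.Ico j k, besNorm (T (i + 1)) fun t => V i t - V (i + 1) t := by
  have hInt (i l : ℕ) : IntervalIntegrable (fun t => |V i t - V l t|) volume 0 (T k) :=
    ((h.intervalIntegrable i _ _).sub (h.intervalIntegrable l _ _)).abs
  calc ∫ t in (0 : ℝ)..T k, |V k t - V j t|
      ≤ ∫ t in (0 : ℝ)..T k, ∑ i ∈ Finset.Ico j k, |V i t - V (i + 1) t| :=
        intervalIntegral.integral_mono_on (h.period_pos k).le (hInt k j)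
          (by simpa only [Finset.sum_fn] using IntervalIntegrable.sum _ fun i _ => hInt i (i + 1))
          fun t _ => by
            rw [abs_sub_comm]
            exact dist_le_Ico_sum_dist (V · t) hjk
    _ = ∑ i ∈ Finset.Ico j k, ∫ t in (0 : ℝ)..T k, |V i t - V (i + 1) t| :=
      intervalIntegral.integral_finsetSum fun i _ => hInt i (i + 1)
    _ ≤ T k * ∑ i ∈ Finset.Ico j k, besNorm (T (i + 1)) fun t => V i t - V (i + 1) t := by
      rw [Finset.mul_sum]
      refine Finset.sum_le_sum fun i hi => ?_
      obtain ⟨hji, hik⟩ := Finset.mem_Ico.1 hi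
      rw [show T k = T (i + 1) from
        (hTk.trans_le (h.monotone_period (by omega))).antisymm (h.monotone_period hik)]
      exact integral_abs_le_mul_besNorm (h.period_pos _)
        ((h.memLp_two i _).sub (h.memLp_two (i + 1) _))

variable (F : ∀ (n : ℕ) (E : ℝ), FundamentalSystem fun t => V n t - E)

lemma abs_trace_le_two_iff {n m : ℕ} (hnm : n ≤ m) (E : ℝ) :
    |(F n E).trace (T m)| ≤ 2 ↔ |(F n E).trace (T n)| ≤ 2 := by
  obtain ⟨k, hk, hkm⟩ := h.exists_period_eq hnm
  rw [hkm]
  exact (F n E).abs_trace_nat_mul_period_le_two_iff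
    (fun t => by simp only [h.periodic n t]) hk

lemma bandRegularOn_trace (hQ : 0 ≤ Q) {x : ℝ} (hx : 1 ≤ x) {n m : ℕ} (hnm : n ≤ m) :
    BandRegularOn (fun E => (F n E).trace (T m)) (fun E => (F n E).traceDeriv (T m))
      (Real.exp ((3 * Q + 4) * T m) / √x) (Real.exp (-((6 * Q + 13) * T m)) / x ^ 3)
      (Ioo (x - 1 / 2) (x + 1 / 2)) := by
  refine (FundamentalSystem.bandRegularOn_trace (F n) (h.one_le_period m) hx
    (h.intervalIntegrable n _ _) (h.integral_abs_le hnm)).mono ?_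
      (exp_neg_div_le hQ (h.one_le_period m) hx)
  rw [div_mul_eq_mul_div]
  exact div_le_div_of_nonneg_right (eight_mul_exp_mul_le (h.one_le_period m)) (Real.sqrt_nonneg x)

lemma abs_trace_sub_trace_le {x : ℝ} (hx : 1 ≤ x) {j k : ℕ} (hjk : j ≤ k) (hTk : T k = T (j + 1))
    {E : ℝ} (hE : E ∈ Ioo (x - 1 / 2) (x + 1 / 2)) :
    |(F k E).trace (T k) - (F j E).trace (T k)| ≤ Real.exp ((3 * Q + 4) * T k) *
      ∑ i ∈ Finset.Ico j k, besNorm (T (i + 1)) fun t => V i t - V (i + 1) t := by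
  have hT := h.period_pos k
  refine (FundamentalSystem.abs_trace_sub_trace_le_of_mem_Ioo (F j) (F k) hT.le hx hE hE
    (h.intervalIntegrable j _ _) (h.intervalIntegrable k _ _) (h.integral_abs_le hjk)
      (h.integral_abs_le le_rfl)).trans ?_
  simp only [sub_sub_sub_cancel_right]
  refine (mul_le_mul (div_le_self (by positivity) (Real.one_le_sqrt.2 hx))
    (h.integral_abs_sub_le hjk hTk) (intervalIntegral.integral_nonneg hT.le fun t _ =>
      abs_nonneg _) (by positivity)).trans ?_
  rw [← mul_assoc]
  exact mul_le_mul_of_nonneg_right (eight_mul_exp_mul_le (h.one_le_period k))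
    (Finset.sum_nonneg fun i _ => besNorm_nonneg _ _)

theorem discriminantTower {θ x : ℝ} (hQ : 0 ≤ Q) (hx : 1 ≤ x)
    (hsum : ∀ j k, j < k → T k = T (j + 1) →
      ∑ i ∈ Finset.Ico j k, besNorm (T (i + 1)) (fun t => V i t - V (i + 1) t) ≤
        θ * Real.exp (-((39 * Q + 68) * T k))) :
    DiscriminantTower (fun n => {E | |(F n E).trace (T n)| ≤ 2})
      (fun n m E => (F n E).trace (T m)) (fun n m E => (F n E).traceDeriv (T m)) T x
      (3 * Q + 4) (6 * Q + 13) θ where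
  one_le_period := h.one_le_period
  monotone_period := h.monotone_period
  two_mul_period_le _ := h.two_mul_period_le
  eq_setOf _ _ hnm := Set.ext fun E => (h.abs_trace_le_two_iff F hnm E).symm
  bandRegularOn _ _ := h.bandRegularOn_trace F hQ hx
  abs_sub_le j k hjk hTk E hE := by
    refine (h.abs_trace_sub_trace_le F hx hjk.le hTk hE).trans
      ((mul_le_mul_of_nonneg_left (hsum j k hjk hTk) (Real.exp_pos _).le).trans_eq ?_)
    rw [mul_left_comm, ← Real.exp_add]
    ring_nf

end PeriodicTower

lemma specSet_eq_setOf_abs_le_two {Δ : ℂ → ℂ} {D : ℝ → ℝ} (hD : ∀ E : ℝ, Δ E = D E) :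
    specSet Δ = {E | |D E| ≤ 2} := by
  simp only [specSet, hD, Complex.norm_real, Real.norm_eq_abs]

lemma le_inv_and_mul_exp_le_one {c K T δ : ℝ} (hK : 1 ≤ K) (hcK : c ≤ K) (hT : 1 ≤ T)
    (hδ₀ : 0 ≤ δ) (hδ : δ ≤ K⁻¹ * (T ^ 3)⁻¹ * Real.exp (-(K * T))) :
    δ ≤ K⁻¹ ∧ δ * Real.exp (c * T) ≤ 1 := by
  have hT₃ : (T ^ 3)⁻¹ ≤ 1 := inv_le_one_of_one_le₀ (one_le_pow₀ hT)
  have : 0 < K := one_pos.trans_le hK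
  have hδK : δ ≤ K⁻¹ * Real.exp (-(K * T)) := hδ.trans
    (mul_le_mul_of_nonneg_right (mul_le_of_le_one_right (by positivity) hT₃) (Real.exp_pos _).le)
  refine ⟨hδK.trans (mul_le_of_le_one_right (by positivity) (Real.exp_le_one_iff.2 ?_)), ?_⟩
  · nlinarith
  · calc δ * Real.exp (c * T) ≤ δ * Real.exp (K * T) := by gcongr
      _ ≤ K⁻¹ * Real.exp (-(K * T)) * Real.exp (K * T) := by gcongr
      _ = K⁻¹ := by rw [mul_assoc, ← Real.exp_add, neg_add_cancel, Real.exp_zero, mul_one]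
      _ ≤ 1 := inv_le_one_of_one_le₀ hK

end Potentials

end Development

/-- For every `Q > 0` there is `K ≥ 8`, depending only on `Q`, with the
following property. Let `τ ∈ (0,1)` and let `(V n)` be `T n`-periodic locally
square-integrable potentials with `T n ≥ 1`, `T n ∣ T (n+1)`, `‖V n‖_B ≤ Q`,
`Σ_{V n} ⊆ [1,∞)`, and `∑ₙ T(n+1)⁶ e^{K T(n+1)} ‖V n - V (n+1)‖_B < (1-τ)/(3K⁴)`.
With `δ₀ = min(K⁻¹ T₁⁻³ e^{-K T₁}, (1-τ)/3)`, for every `N`, every `x ∈ Σ_{V N}`, and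
every `0 < δ ≤ δ₀`, one has `|(x-δ, x+δ) ∩ Σ_{V N}| ≥ τ δ`. -/
theorem step_by_step_homogeneity (Q : ℝ) (hQ : 0 < Q) :
    ∃ K : ℝ, 8 ≤ K ∧
      ∀ (τ : ℝ), τ ∈ Set.Ioo (0:ℝ) 1 →
      ∀ (V : ℕ → ℝ → ℝ) (T : ℕ → ℝ) (Δ : ℕ → ℂ → ℂ),
        (∀ n, 1 ≤ T n) →
        (∀ n, ∃ k : ℕ, 0 < k ∧ T (n + 1) = (k : ℝ) * T n) →
        (∀ n, Function.Periodic (V n) (T n)) →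
        (∀ n, LocallyIntegrable (fun t => (V n t) ^ 2) volume) →
        (∀ n, besNorm (T n) (V n) ≤ Q) →
        (∀ n, IsDiscriminant (T n) (V n) (Δ n)) →
        (∀ n, specSet (Δ n) ⊆ Set.Ici (1:ℝ)) →
        Summable (fun n => (T (n + 1)) ^ 6 * Real.exp (K * T (n + 1)) *
          besNorm (T (n + 1)) (fun t => V n t - V (n + 1) t)) →
        (∑' n, (T (n + 1)) ^ 6 * Real.exp (K * T (n + 1)) *
          besNorm (T (n + 1)) (fun t => V n t - V (n + 1) t)) < (1 - τ) / (3 * K ^ 4) →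
        ∀ N : ℕ, ∀ x ∈ specSet (Δ N), ∀ δ : ℝ, 0 < δ →
          δ ≤ min (K⁻¹ * ((T 0) ^ 3)⁻¹ * Real.exp (-(K * T 0))) ((1 - τ) / 3) →
          ENNReal.ofReal (τ * δ) ≤
            volume (Set.Ioo (x - δ) (x + δ) ∩ specSet (Δ N)) := by
  refine ⟨39 * Q + 68, by linarith, fun τ hτ V T Δ hT hdvd hper hloc hbes hΔ hspec hsum hlt N x hx
    δ hδ₀ hδ => ?_⟩
  have hK : 1 ≤ 39 * Q + 68 := by linarith
  have hV : PeriodicTower V T Q :=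
    ⟨hT, hdvd, hper, fun n => (hΔ n).memLp_two (one_pos.trans_le (hT n)) (hloc n) fun h₀ =>
      not_le.2 one_pos (Set.mem_Ici.1 (hspec n h₀)), hbes⟩
  choose F hF using fun n => (hΔ n).exists_fundamentalSystem (hV.intervalIntegrable n)
  have hsmall : (1 - τ) / (3 * (39 * Q + 68) ^ 4) ≤ 1 - τ :=
    div_le_self (by linarith [hτ.2]) (by linarith [one_le_pow₀ hK (n := 4)])
  have hx₁ : 1 ≤ x := hspec N hx
  have htower := hV.discriminantTower (θ := 1 - τ) F hQ.le hx₁ fun j k _ hTk =>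
    sum_Ico_le_mul_exp_neg hT hV.monotone_period (fun n => besNorm_nonneg _ _) hsum
      (hlt.le.trans hsmall) hTk
  obtain ⟨hδK, hδT⟩ := le_inv_and_mul_exp_le_one (c := 3 * Q + 4) hK (by linarith) (hT 0) hδ₀.le
    (hδ.trans (min_le_left _ _))
  have hδθ : δ ≤ (1 - τ) / 3 := hδ.trans (min_le_right _ _)
  have hδ₈ : δ ≤ 1 / 8 := hδK.trans (by rw [one_div]; exact inv_anti₀ (by norm_num) (by linarith))
  rw [specSet_eq_setOf_abs_le_two (hF N)] at hx ⊢
  simpa only [sub_sub_cancel] using htower.ofReal_le_volume hx₁ (by linarith) (by linarith) hδ₀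
    hδ₈ (by linarith) (by linarith [hτ.1]) hδT hx
end
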